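/- For every odd integer s ≥ 10⁴, there are at least (1/10)·s^{1/2}/(log s)^{1/2} irrational numbers among ζ(3), ζ(5), ζ(7), …, ζ(s); that is, the number of odd integers i with 3 ≤ i ≤ s and ζ(i) irrational is at least (1/10)·s^{1/2}/(log s)^{1/2}. -/

import Mathlib

/-!
Let `N` be the least integer not below the claimed bound and suppose that fewer than `N` of the odd
zeta values up to `s` are irrational. The contradiction comes from nonzero rational numbers of
bounded denominator that tend to `0`. They are built by the elimination method of
Fischler, Sprang and Zudilin.

Put `E = 1 + 2 + ⋯ + N` (`tri N`) and let `σ ∈ {s - 1, s}` be such that `N + σ` is odd. For even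
`n` let `rfun` be the product of the polynomial
`∏_{b ≤ N} ∏_{j ≤ 15 b n} (b (t - 7 n) + j) / n! ^ (15 E)`, which vanishes at all rationals of
`[-8 n, 7 n]` with denominator at most `N`, and of `(n! / (t (t + 1) ⋯ (t + n))) ^ σ`. For each
`b ≤ N` sum `rfun` over the positive fractions `(m + 1) / b`; call the result `T b`.

*Linear forms.* Let `d = lcm (1, …, n)`. As `rfun` is, up to one linear factor for each `b`, a
product of integer-valued binomial polynomials and of building blocks `n! / (t ⋯ (t + n))`,
`d ^ σ * rfun` is an integer combination of the `(d / (t + k)) ^ i` (`rfun_partial`; the polynomial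
part vanishes by decay). The antisymmetry `t ↦ -n - t` kills the even orders
(`rfun_partial_odd`). Hence `2 d ^ σ T b` is a linear form in `1` and the odd zeta values, whose
coefficient at `ζ(i)` depends on `b` only through the factor `b ^ i` (`linear_form`). Its rational
part is an integer (`ratPart_int`): grouped by the fractions `q / b`, it consists of subsums of the
vanishing expansions of `rfun (-q / b)`, whose terms have pairwise coprime denominators.

*Elimination.* By Descartes' rule of signs a nonzero polynomial with at most `N` terms cannot
vanish at `1, …, N`. So there are integers `w b` with `∑ w b * b ^ i = 0` for the fewer than `N`
exponents `i` of irrational zeta values and `∑ w b * b ≠ 0` (`exists_weights`). Up to a fixed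
common denominator, `2 d ^ σ ∑ w b * T b` is therefore an integer (`weighted_form_int`).

*Nonvanishing.* To the right of `7 n` the function `rfun` is positive and unimodal, and its peak
becomes arbitrarily flat as `n` grows (`unimodal`). Therefore `T b` differs from `b * T 1` by at
most `2 b` times the peak value, while `T 1` is much larger than the peak value. It follows that
`∑ w b * T b` is nonzero and at most a constant times `T 1` (`weighted_sum`).

*Size.* Up to a constant and a power of `n`, `T 1` is at most `((16 e N) ^ (15 E) / 8 ^ σ) ^ n` (`sum_le`), and
`d ≤ 5 ^ n` for large `n` (`lcm_le`). The integers above tend to `0`, because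
`(16 e N) ^ (15 E) < (8 / 5) ^ σ` by the choice of `N` (`parameters`). This is the contradiction
(`card_irrational_gt`).
-/

open Real

/-- The real value of the Riemann zeta function at a natural number argument. -/
noncomputable def zetaR (k : ℕ) : ℝ := (riemannZeta k).re

/-! ### Partial fractions with integrality -/

namespace OddZeta
open Polynomial

/-- Reals that avoid the poles `0, -1, …, -n`. -/
abbrev Dom (n : ℕ) := {t : ℝ // ∀ k : ℕ, k ≤ n → t + k ≠ 0}

/-- The scaled simple fraction `d / (t + k)`. -/
noncomputable def frac (n d k : ℕ) : Dom n → ℝ := fun t => d / ((t : ℝ) + k)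

/-- Integer combinations of the `(d / (t + k)) ^ i` with `1 ≤ i ≤ w` and `k ≤ n`. -/
def polar (n d w : ℕ) : AddSubgroup (Dom n → ℝ) :=
  AddSubgroup.closure {f | ∃ i k, 1 ≤ i ∧ i ≤ w ∧ k ≤ n ∧ f = frac n d k ^ i}

/-- Functions on `Dom n` given by a real polynomial. -/
def polyFun (n : ℕ) : AddSubgroup (Dom n → ℝ) where
  carrier := {f | ∃ p : ℝ[X], f = fun t : Dom n => p.eval (t : ℝ)}
  zero_mem' := ⟨0, by ext; simp⟩
  add_mem' := by
    rintro _ _ ⟨p, rfl⟩ ⟨q, rfl⟩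
    exact ⟨p + q, by ext; simp⟩
  neg_mem' := by
    rintro _ ⟨p, rfl⟩
    exact ⟨-p, by ext; simp⟩

/-- Partial fractions of a product of two simple fractions; the coefficient `d / (k' - k)` is an
integer because `d` is divisible by every positive integer up to `n`. -/
lemma frac_mul_frac {n d k k' : ℕ} (hd : ∀ l, 1 ≤ l → l ≤ n → l ∣ d) (hk : k ≤ n) (hk' : k' ≤ n)
    (h : k ≠ k') : ∃ c : ℤ, frac n d k * frac n d k' = c • (frac n d k - frac n d k') := by
  obtain ⟨c, hc⟩ : ((k' : ℤ) - k) ∣ d := by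
    rcases lt_or_gt_of_ne h with h | h
    · have := hd (k' - k) (by omega) (by omega)
      have := Int.natCast_dvd_natCast.2 this
      rwa [Nat.cast_sub h.le] at this
    · have := hd (k - k') (by omega) (by omega)
      have := Int.natCast_dvd_natCast.2 this
      rw [Nat.cast_sub h.le] at this
      rwa [← neg_dvd, neg_sub]
  refine ⟨c, ?_⟩
  ext t
  have h1 := t.2 k hk
  have h2 := t.2 k' hk'
  have hc' : (d : ℝ) = ((k' : ℝ) - k) * c := by exact_mod_cast hc
  simp only [frac, Pi.mul_apply, Pi.smul_apply, Pi.sub_apply, zsmul_eq_mul]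
  field_simp
  rw [hc']; ring

lemma frac_pow_mem_polar {n d w i k : ℕ} (h1 : 1 ≤ i) (h2 : i ≤ w) (hk : k ≤ n) :
    frac n d k ^ i ∈ polar n d w :=
  AddSubgroup.subset_closure ⟨i, k, h1, h2, hk, rfl⟩

lemma polar_mul_frac {n d w k' : ℕ} (hd : ∀ l, 1 ≤ l → l ≤ n → l ∣ d) (hk' : k' ≤ n)
    {f : Dom n → ℝ} (hf : f ∈ polar n d w) : f * frac n d k' ∈ polar n d (w + 1) := by
  induction hf using AddSubgroup.closure_induction with
  | zero => simp
  | add x y _ _ hx hy => rw [add_mul]; exact AddSubgroup.add_mem _ hx hy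
  | neg x _ hx => rw [neg_mul]; exact AddSubgroup.neg_mem _ hx
  | mem x hx =>
    obtain ⟨i, k, h1, h2, hk, rfl⟩ := hx
    by_cases hkk : k = k'
    · subst hkk
      rw [← pow_succ]
      exact frac_pow_mem_polar (by omega) (by omega) hk
    · obtain ⟨c, hc⟩ := frac_mul_frac hd hk hk' hkk
      clear h1
      induction i with
      | zero => simpa using frac_pow_mem_polar (d := d) (i := 1) (w := w + 1) le_rfl (by omega) hk'
      | succ i ih =>
        have e : frac n d k ^ (i + 1) * frac n d k'
            = c • (frac n d k ^ (i + 1) - frac n d k ^ i * frac n d k') := by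
          rw [pow_succ, mul_assoc, hc, mul_smul_comm, mul_sub]
        rw [e]
        exact AddSubgroup.zsmul_mem _ (AddSubgroup.sub_mem _
          (frac_pow_mem_polar (by omega) (by omega) hk) (ih (by omega))) _

/-- The partial fraction coefficients of `n! / (t (t + 1) ⋯ (t + n))` are integers (signed binomial
coefficients): passing from `n` to `n + 1` is the difference `f (t) - f (t + 1)`. -/
lemma factorial_div_prod (n : ℕ) : ∃ c : ℕ → ℤ, ∀ t : ℝ, (∀ k : ℕ, k ≤ n → t + k ≠ 0) →
    (n.factorial : ℝ) / ∏ k ∈ Finset.range (n + 1), (t + k)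
      = ∑ k ∈ Finset.range (n + 1), c k / (t + k) := by
  induction n with
  | zero => exact ⟨fun _ => 1, fun t ht => by simp⟩
  | succ n ih =>
    obtain ⟨c, hc⟩ := ih
    refine ⟨fun k => (if k ≤ n then c k else 0) - (if k = 0 then 0 else c (k - 1)), fun t ht => ?_⟩
    have h1 := hc t (fun k hk => ht k (by omega))
    have h2 := hc (t + 1) (fun k hk => by
      have := ht (k + 1) (by omega)
      push_cast at this
      rwa [add_assoc, add_comm (1 : ℝ)])
    have hP : ∏ k ∈ Finset.range n, (t + 1 + k) ≠ 0 := by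
      refine Finset.prod_ne_zero_iff.2 fun k hk => ?_
      have := ht (k + 1) (by have := Finset.mem_range.1 hk; omega)
      push_cast at this
      rwa [add_assoc, add_comm (1 : ℝ)]
    have h0 : t ≠ 0 := by simpa using ht 0 (by omega)
    have hn : t + 1 + n ≠ 0 := by
      have := ht (n + 1) le_rfl
      push_cast at this
      rwa [add_assoc, add_comm (1 : ℝ)]
    have e1 : ∏ k ∈ Finset.range (n + 1), (t + k) = t * ∏ k ∈ Finset.range n, (t + 1 + k) := by
      rw [Finset.prod_range_succ', mul_comm]
      simp [add_assoc, add_comm (1 : ℝ)]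
    have e2 : ∏ k ∈ Finset.range (n + 1 + 1), (t + k)
        = t * (∏ k ∈ Finset.range n, (t + 1 + k)) * (t + 1 + n) := by
      rw [Finset.prod_range_succ, e1]; push_cast; ring
    have e3 : ∏ k ∈ Finset.range (n + 1), (t + 1 + k)
        = (∏ k ∈ Finset.range n, (t + 1 + k)) * (t + 1 + n) := by
      rw [Finset.prod_range_succ]
    have key : ((n + 1).factorial : ℝ) / ∏ k ∈ Finset.range (n + 1 + 1), (t + k)
        = (n.factorial : ℝ) / ∏ k ∈ Finset.range (n + 1), (t + k)
          - (n.factorial : ℝ) / ∏ k ∈ Finset.range (n + 1), (t + 1 + k) := by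
      rw [e1, e2, e3, Nat.factorial_succ]
      push_cast
      field_simp
      ring
    rw [key, h1, h2]
    simp only [Int.cast_sub, sub_div, Finset.sum_sub_distrib]
    congr 1
    · rw [Finset.sum_range_succ _ (n + 1)]
      simp only [show ¬ (n + 1 ≤ n) by omega, if_false, Int.cast_zero, zero_div, add_zero]
      refine Finset.sum_congr rfl fun k hk => ?_
      rw [if_pos (by have := Finset.mem_range.1 hk; omega)]
    · rw [Finset.sum_range_succ' _ (n + 1)]
      simp [add_assoc, add_comm (1 : ℝ)]

/-- The scaled building block `d · n! / (t (t + 1) ⋯ (t + n))`. -/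
noncomputable def gfun (n d : ℕ) : Dom n → ℝ :=
  fun t => d * ((n.factorial : ℝ) / ∏ k ∈ Finset.range (n + 1), ((t : ℝ) + k))

lemma gfun_eq (n d : ℕ) : ∃ c : ℕ → ℤ,
    gfun n d = ∑ k ∈ Finset.range (n + 1), c k • frac n d k := by
  obtain ⟨c, hc⟩ := factorial_div_prod n
  refine ⟨c, ?_⟩
  ext t
  simp only [gfun, hc t t.2, Finset.sum_apply, Finset.mul_sum]
  refine Finset.sum_congr rfl fun k _ => ?_
  rw [Pi.smul_apply, zsmul_eq_mul, frac]
  ring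

lemma gfun_pow_mem {n d : ℕ} (hd : ∀ l, 1 ≤ l → l ≤ n → l ∣ d) (w : ℕ) :
    gfun n d ^ (w + 1) ∈ polar n d (w + 1) := by
  obtain ⟨c, hc⟩ := gfun_eq n d
  induction w with
  | zero =>
    rw [zero_add, pow_one, hc]
    refine AddSubgroup.sum_mem _ fun k hk => AddSubgroup.zsmul_mem _ ?_ _
    simpa using frac_pow_mem_polar (d := d) (i := 1) (w := 1) le_rfl le_rfl
      (Nat.lt_succ_iff.1 (Finset.mem_range.1 hk))
  | succ w ih =>
    rw [pow_succ]
    nth_rewrite 2 [hc]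
    rw [Finset.mul_sum]
    refine AddSubgroup.sum_mem _ fun k hk => ?_
    rw [mul_smul_comm]
    exact AddSubgroup.zsmul_mem _ (polar_mul_frac hd (Nat.lt_succ_iff.1 (Finset.mem_range.1 hk)) ih) _

/-- The binomial polynomial `x (x - 1) ⋯ (x - l + 1) / l!`. -/
noncomputable def bin (x : ℝ) (l : ℕ) : ℝ :=
  (∏ j ∈ Finset.range l, (x - j)) / l.factorial

lemma bin_pascal (x : ℝ) (l : ℕ) : bin (x + 1) (l + 1) = bin x (l + 1) + bin x l := by
  have e : ∏ j ∈ Finset.range (l + 1), (x + 1 - j) = (x + 1) * ∏ j ∈ Finset.range l, (x - j) := by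
    rw [Finset.prod_range_succ', mul_comm]; simp
  simp only [bin]
  rw [e, Finset.prod_range_succ, Nat.factorial_succ]
  have := Nat.factorial_ne_zero l
  push_cast
  field_simp
  ring

lemma bin_absorb (x : ℝ) (l : ℕ) : bin x (l + 1) = x / (l + 1) * bin (x - 1) l := by
  have e : ∏ j ∈ Finset.range (l + 1), (x - j) = x * ∏ j ∈ Finset.range l, (x - 1 - j) := by
    rw [Finset.prod_range_succ', mul_comm]
    simp [sub_sub, add_comm]
  simp only [bin]
  rw [e, Nat.factorial_succ]
  have := Nat.factorial_ne_zero l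
  push_cast
  field_simp

lemma bin_mul_polyFun {n b l : ℕ} {c : ℤ} {f : Dom n → ℝ} (hf : f ∈ polyFun n) :
    (fun t : Dom n => bin (b * (t : ℝ) + c) l) * f ∈ polyFun n := by
  obtain ⟨p, rfl⟩ := hf
  refine ⟨C ((l.factorial : ℝ)⁻¹) * (∏ j ∈ Finset.range l, (C (b : ℝ) * X + C ((c : ℝ) - j))) * p, ?_⟩
  ext t
  simp only [Pi.mul_apply, bin, eval_mul, eval_C, eval_prod, eval_add, eval_X]
  rw [div_eq_inv_mul]
  congr 3
  ext j
  ring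

/-- Multiplication by an integer-valued binomial polynomial of degree at most `n` keeps the
`d`-integrality of the polar parts, since `d` is divisible by every `l ≤ n`. -/
lemma bin_mul_mem {n d w b : ℕ} (hd : ∀ l, 1 ≤ l → l ≤ n → l ∣ d) (l : ℕ) (hl : l ≤ n) :
    ∀ (c : ℤ) (f : Dom n → ℝ), f ∈ polar n d w ⊔ polyFun n →
      (fun t : Dom n => bin (b * (t : ℝ) + c) l) * f ∈ polar n d w ⊔ polyFun n := by
  induction l with
  | zero =>
    intro c f hf
    convert hf using 1
    ext t
    simp [bin]
  | succ l ih =>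
    have ih := ih (by omega)
    -- it is enough to multiply one power of a simple fraction
    have main : ∀ (c : ℤ) (i k : ℕ), 1 ≤ i → i ≤ w → k ≤ n →
        (fun t : Dom n => bin (b * ((t : ℝ) + k) + c) (l + 1)) * frac n d k ^ i
          ∈ polar n d w ⊔ polyFun n := by
      intro c i k h1 h2 hk
      have step : ∀ c : ℤ, (fun t : Dom n => bin (b * ((t : ℝ) + k) + c) l) * frac n d k ^ i
          ∈ polar n d w ⊔ polyFun n := by
        intro c
        have := ih (b * k + c) (frac n d k ^ i)
          (AddSubgroup.mem_sup_left (frac_pow_mem_polar h1 h2 hk))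
        convert this using 4
        push_cast; ring
      have pas : ∀ c : ℤ, (fun t : Dom n => bin (b * ((t : ℝ) + k) + (c + 1 : ℤ)) (l + 1))
            * frac n d k ^ i
          = (fun t : Dom n => bin (b * ((t : ℝ) + k) + c) (l + 1)) * frac n d k ^ i
            + (fun t : Dom n => bin (b * ((t : ℝ) + k) + c) l) * frac n d k ^ i := by
        intro c
        rw [← add_mul]
        congr 1
        ext t
        have := bin_pascal (b * ((t : ℝ) + k) + c) l
        simp only [Pi.add_apply]
        rw [← this]
        push_cast; ring_nf
      induction c using Int.induction_on with
      | zero =>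
        -- with `x = b (t + k)`, absorption `bin x (l + 1) = x / (l + 1) * bin (x - 1) l` cancels one
        -- power of the pole, and `l + 1` divides `d`; Pascal's rule then moves the shift `c`
        obtain ⟨i, rfl⟩ : ∃ i', i = i' + 1 := ⟨i - 1, by omega⟩
        obtain ⟨q, hq⟩ := hd (l + 1) (by omega) hl
        have hf : (b * q) • frac n d k ^ i ∈ polar n d w ⊔ polyFun n := by
          refine AddSubgroup.nsmul_mem _ ?_ _
          rcases Nat.eq_zero_or_pos i with rfl | hi
          · exact AddSubgroup.mem_sup_right ⟨1, by ext; simp⟩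
          · exact AddSubgroup.mem_sup_left (frac_pow_mem_polar hi (by omega) hk)
        have := ih (b * k - 1) _ hf
        convert this using 1
        ext t
        have h0 := t.2 k hk
        have hq' : (d : ℝ) = (l + 1) * q := by exact_mod_cast hq
        have e : (b : ℝ) * (t : ℝ) + ((b * k - 1 : ℤ) : ℝ) = b * ((t : ℝ) + k) - 1 := by
          push_cast; ring
        rw [Pi.mul_apply, Pi.mul_apply, Pi.smul_apply, nsmul_eq_mul]
        simp only [Pi.pow_apply, e, Int.cast_zero, add_zero, bin_absorb, pow_succ, frac, hq']
        push_cast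
        field_simp
      | succ c ihc =>
        rw [pas]
        exact AddSubgroup.add_mem _ ihc (step _)
      | pred c ihc =>
        have h := pas (-(c : ℤ) - 1)
        rw [sub_add_cancel] at h
        rw [← sub_eq_iff_eq_add] at h
        rw [← h]
        exact AddSubgroup.sub_mem _ ihc (step _)
    intro c f hf
    obtain ⟨g, hg, p, hp, rfl⟩ := AddSubgroup.mem_sup.1 hf
    rw [mul_add]
    refine AddSubgroup.add_mem _ ?_ (AddSubgroup.mem_sup_right (bin_mul_polyFun hp))
    clear hf
    induction hg using AddSubgroup.closure_induction with
    | zero => simp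
    | add x y _ _ hx hy => rw [mul_add]; exact AddSubgroup.add_mem _ hx hy
    | neg x _ hx => rw [mul_neg]; exact AddSubgroup.neg_mem _ hx
    | mem x hx =>
      obtain ⟨i, k, h1, h2, hk, rfl⟩ := hx
      convert main (c - b * k) i k h1 h2 hk using 4
      push_cast; ring

/-- A product of `L` blocks of `n` consecutive factors is a product of `L` binomial polynomials
of degree `n`, up to `n! ^ L`. -/
lemma block_mul_mem {n d w b : ℕ} (hd : ∀ l, 1 ≤ l → l ≤ n → l ∣ d) (c : ℤ) (L : ℕ)
    {f : Dom n → ℝ} (hf : f ∈ polar n d w ⊔ polyFun n) :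
    (fun t : Dom n => (∏ j ∈ Finset.range (L * n), (b * (t : ℝ) + c + j)) / (n.factorial : ℝ) ^ L)
      * f ∈ polar n d w ⊔ polyFun n := by
  induction L with
  | zero =>
    convert hf using 1
    ext t
    simp
  | succ L ih =>
    have := bin_mul_mem (b := b) hd n le_rfl (c + L * n + n - 1) _ ih
    convert this using 1
    ext t
    have e : ∏ j ∈ Finset.range n, (b * (t : ℝ) + c + ((L * n + j : ℕ) : ℝ))
        = ∏ j ∈ Finset.range n, (b * (t : ℝ) + ((c + L * n + n - 1 : ℤ) : ℝ) - j) := by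
      rw [← Finset.prod_range_reflect]
      refine Finset.prod_congr rfl fun j hj => ?_
      have := Finset.mem_range.1 hj
      rw [Nat.sub_sub]
      push_cast [Nat.cast_sub (show 1 + j ≤ n by omega)]
      ring
    simp only [Pi.mul_apply, bin]
    rw [Nat.succ_mul, Finset.prod_range_add, e]
    ring

lemma polar_coeff {n d w : ℕ} {f : Dom n → ℝ} (hf : f ∈ polar n d w) :
    ∃ A : ℕ → ℕ → ℤ, f = ∑ i ∈ Finset.Icc 1 w, ∑ k ∈ Finset.range (n + 1), A i k • frac n d k ^ i := by
  induction hf using AddSubgroup.closure_induction with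
  | zero => exact ⟨0, by simp⟩
  | add x y _ _ hx hy =>
    obtain ⟨A, hA⟩ := hx
    obtain ⟨B, hB⟩ := hy
    refine ⟨A + B, ?_⟩
    rw [hA, hB]
    simp only [← Finset.sum_add_distrib, Pi.add_apply, add_smul]
  | neg x _ hx =>
    obtain ⟨A, hA⟩ := hx
    refine ⟨-A, ?_⟩
    rw [hA]
    simp only [← Finset.sum_neg_distrib, Pi.neg_apply, neg_smul]
  | mem x hx =>
    obtain ⟨i, k, h1, h2, hk, rfl⟩ := hx
    refine ⟨fun i' k' => if i' = i then (if k' = k then 1 else 0) else 0, ?_⟩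
    rw [Finset.sum_eq_single_of_mem i (Finset.mem_Icc.2 ⟨h1, h2⟩)]
    · rw [Finset.sum_eq_single_of_mem k (Finset.mem_range.2 (by omega))]
      · simp
      · intro k' _ h; simp [h]
    · intro i' _ h; simp [h]

/-- The numerator `∏_{b ≤ N} ∏_{j ≤ 15 b n} (b (t - 7 n) + j)`, which vanishes at every rational
number in `[-8 n, 7 n]` with denominator at most `N`. -/
noncomputable def num (N n : ℕ) (t : ℝ) : ℝ :=
  ∏ b ∈ Finset.Icc 1 N, ∏ j ∈ Finset.range (15 * b * n + 1), (b * (t - 7 * n) + j)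

/-- The sum `1 + 2 + ⋯ + N`. -/
def tri (N : ℕ) : ℕ := ∑ b ∈ Finset.Icc 1 N, b

/-- The rational function whose values at fractions with denominator `b` are summed. -/
noncomputable def rfun (N σ n : ℕ) (t : ℝ) : ℝ :=
  num N n t / (n.factorial : ℝ) ^ (15 * tri N)
    * ((n.factorial : ℝ) / ∏ k ∈ Finset.range (n + 1), (t + k)) ^ σ

/-- For each `b` the `15 b n + 1` factors of the numerator form `15 b` blocks of length `n`
and one linear factor, the latter being a binomial polynomial of degree `1`. -/
lemma num_mul_mem {n d w : ℕ} (hn : 1 ≤ n) (hd : ∀ l, 1 ≤ l → l ≤ n → l ∣ d)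
    (N : ℕ) {f : Dom n → ℝ} (hf : f ∈ polar n d w ⊔ polyFun n) :
    (fun t : Dom n => num N n t / (n.factorial : ℝ) ^ (15 * tri N)) * f
      ∈ polar n d w ⊔ polyFun n := by
  induction N with
  | zero =>
    convert hf using 1
    ext t
    simp [num, tri]
  | succ N ih =>
    have h1 := block_mul_mem (b := N + 1) hd (-((N + 1) * (7 * n))) (15 * (N + 1)) ih
    have h2 := bin_mul_mem (b := N + 1) hd 1 hn ((N + 1) * (8 * n)) _ h1
    convert h2 using 1
    ext t
    simp only [Pi.mul_apply, num, tri, bin]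
    rw [Finset.prod_Icc_succ_top (by omega), Finset.sum_Icc_succ_top (by omega),
      Finset.prod_range_succ,
      Nat.mul_add 15 (∑ k ∈ Finset.Icc 1 N, k), pow_add]
    have e : ∏ j ∈ Finset.range (15 * (N + 1) * n), (((N + 1 : ℕ) : ℝ) * ((t : ℝ) - 7 * n) + j)
        = ∏ j ∈ Finset.range (15 * (N + 1) * n),
          (((N + 1 : ℕ) : ℝ) * t + ((-((N + 1) * (7 * n)) : ℤ) : ℝ) + j) := by
      refine Finset.prod_congr rfl fun j _ => ?_
      push_cast; ring
    rw [e]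
    simp only [Finset.prod_range_one, Nat.factorial_one]
    push_cast
    ring

/-- Partial fractions of `d ^ σ * rfun`, with integer coefficients in the `d / (t + k)`. -/
lemma rfun_partial {N σ n d : ℕ} (hn : 1 ≤ n) (hσ : 1 ≤ σ) (hd : ∀ l, 1 ≤ l → l ≤ n → l ∣ d) :
    ∃ (A : ℕ → ℕ → ℤ) (p : ℝ[X]), ∀ t : ℝ, (∀ k : ℕ, k ≤ n → t + k ≠ 0) →
      (d : ℝ) ^ σ * rfun N σ n t
        = ∑ i ∈ Finset.Icc 1 σ, ∑ k ∈ Finset.range (n + 1), A i k * (d / (t + k)) ^ i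
          + p.eval t := by
  obtain ⟨w, rfl⟩ : ∃ w, σ = w + 1 := ⟨σ - 1, by omega⟩
  have h := num_mul_mem hn hd N (AddSubgroup.mem_sup_left (gfun_pow_mem hd w))
  obtain ⟨g, hg, q, ⟨p, rfl⟩, hgp⟩ := AddSubgroup.mem_sup.1 h
  obtain ⟨A, rfl⟩ := polar_coeff hg
  refine ⟨A, p, fun t ht => ?_⟩
  have := congrFun hgp ⟨t, ht⟩
  simp only [Pi.add_apply, Finset.sum_apply] at this
  have e : ∀ i k, (A i k • frac n d k ^ i) ⟨t, ht⟩ = A i k * (d / (t + k)) ^ i := by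
    intro i k
    rw [Pi.smul_apply, zsmul_eq_mul, Pi.pow_apply, frac]
  simp only [e] at this
  rw [this]
  simp only [Pi.mul_apply, Pi.pow_apply, gfun, rfun]
  rw [mul_pow]
  ring

end OddZeta

/-! ### Size of the numerator and symmetry of the coefficients -/

namespace OddZeta
open Polynomial Filter Topology

lemma num_bounds {N n : ℕ} {t : ℝ} (ht : 7 * n ≤ t) :
    0 ≤ num N n t ∧ num N n t ≤ (2 * N * (t + n)) ^ (15 * tri N * n + N) := by
  have hn : (0 : ℝ) ≤ n := Nat.cast_nonneg n
  have h0 : ∀ b ∈ Finset.Icc 1 N, ∀ j ∈ Finset.range (15 * b * n + 1),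
      (0 : ℝ) ≤ b * (t - 7 * n) + j := by
    intro b _ j _
    have : (0 : ℝ) ≤ b * (t - 7 * n) := mul_nonneg (Nat.cast_nonneg b) (by linarith)
    have := Nat.cast_nonneg (α := ℝ) j
    linarith
  have h1 : ∀ b ∈ Finset.Icc 1 N, ∀ j ∈ Finset.range (15 * b * n + 1),
      b * (t - 7 * n) + j ≤ 2 * N * (t + n) := by
    intro b hb j hj
    have hb' : (b : ℝ) ≤ N := by exact_mod_cast (Finset.mem_Icc.1 hb).2
    have hj' : (j : ℝ) ≤ 15 * b * n := by
      exact_mod_cast Nat.lt_succ_iff.1 (Finset.mem_range.1 hj)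
    have hb0 := Nat.cast_nonneg (α := ℝ) b
    have : (b : ℝ) * (2 * (t + n)) ≤ N * (2 * (t + n)) :=
      mul_le_mul_of_nonneg_right hb' (by linarith)
    nlinarith
  refine ⟨Finset.prod_nonneg fun b hb => Finset.prod_nonneg (h0 b hb), ?_⟩
  have e : (15 * tri N * n + N) = ∑ b ∈ Finset.Icc 1 N, (15 * b * n + 1) := by
    simp [tri, Finset.sum_add_distrib, Finset.mul_sum, Finset.sum_mul]
  rw [e, ← Finset.prod_pow_eq_pow_sum]
  refine Finset.prod_le_prod (fun b hb => Finset.prod_nonneg (h0 b hb)) fun b hb => ?_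
  calc _ ≤ ∏ j ∈ Finset.range (15 * b * n + 1), 2 * N * (t + n) :=
        Finset.prod_le_prod (h0 b hb) (h1 b hb)
    _ = _ := by simp

/-- The function `rfun` decays at least like `t⁻²`, since its degree is at most `-2`. -/
lemma tendsto_mul_rfun {N σ n : ℕ} (hn : 1 ≤ n)
    (hσ : 15 * tri N * n + N + 2 ≤ σ * (n + 1)) :
    Tendsto (fun t => t * rfun N σ n t) atTop (𝓝 0) := by
  set D := 15 * tri N * n + N with hD
  set K : ℝ := (4 * N) ^ D * (n.factorial : ℝ) ^ σ with hK
  have hK0 : 0 ≤ K := by positivity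
  have hlim : Tendsto (fun t : ℝ => K / t) atTop (𝓝 0) := tendsto_const_nhds.div_atTop tendsto_id
  have hn' : (1 : ℝ) ≤ n := by exact_mod_cast hn
  refine tendsto_of_tendsto_of_tendsto_of_le_of_le' tendsto_const_nhds hlim ?_ ?_
  · filter_upwards [eventually_ge_atTop (7 * n : ℝ)] with t ht
    have h0 := (num_bounds (N := N) ht).1
    have ht0 : 0 < t := by linarith
    unfold rfun
    have : 0 ≤ ∏ k ∈ Finset.range (n + 1), (t + (k : ℝ)) := Finset.prod_nonneg fun k _ => by positivity
    positivity
  · filter_upwards [eventually_ge_atTop (7 * n : ℝ)] with t ht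
    obtain ⟨h0, h1⟩ := num_bounds (N := N) ht
    have ht0 : 0 < t := by linarith
    have ht1 : 1 ≤ t := by linarith
    have hfac : (1 : ℝ) ≤ n.factorial := by exact_mod_cast Nat.one_le_iff_ne_zero.2 (Nat.factorial_ne_zero n)
    have a1 : num N n t / (n.factorial : ℝ) ^ (15 * tri N) ≤ (4 * N * t) ^ D := by
      calc _ ≤ num N n t := div_le_self h0 (one_le_pow₀ hfac)
        _ ≤ _ := h1
        _ ≤ _ := by
          have : (0 : ℝ) ≤ N := Nat.cast_nonneg N
          refine pow_le_pow_left₀ (by positivity) ?_ _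
          nlinarith [mul_nonneg this (show 0 ≤ t - n by linarith)]
    have a2 : t ^ (n + 1) ≤ ∏ k ∈ Finset.range (n + 1), (t + (k : ℝ)) := by
      calc t ^ (n + 1) = ∏ k ∈ Finset.range (n + 1), t := by simp
        _ ≤ _ := Finset.prod_le_prod (fun _ _ => ht0.le) fun k _ => by
          have := Nat.cast_nonneg (α := ℝ) k
          linarith
    have a3 : ((n.factorial : ℝ) / ∏ k ∈ Finset.range (n + 1), (t + (k : ℝ))) ^ σ
        ≤ (n.factorial : ℝ) ^ σ / t ^ (D + 2) := by
      calc _ ≤ ((n.factorial : ℝ) / t ^ (n + 1)) ^ σ := by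
            refine pow_le_pow_left₀ ?_ ?_ _
            · exact div_nonneg (by positivity) (Finset.prod_nonneg fun k _ => by positivity)
            · exact div_le_div_of_nonneg_left (by positivity) (by positivity) a2
        _ = (n.factorial : ℝ) ^ σ / t ^ (σ * (n + 1)) := by
            rw [div_pow, ← pow_mul, mul_comm σ]
        _ ≤ _ := div_le_div_of_nonneg_left (by positivity) (by positivity)
            (pow_le_pow_right₀ ht1 hσ)
    calc t * rfun N σ n t ≤ t * ((4 * N * t) ^ D * ((n.factorial : ℝ) ^ σ / t ^ (D + 2))) := by
          unfold rfun
          refine mul_le_mul_of_nonneg_left (mul_le_mul a1 a3 ?_ (by positivity)) ht0.le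
          exact pow_nonneg (div_nonneg (by positivity) (Finset.prod_nonneg fun k _ => by positivity)) _
      _ = K / t := by
          clear_value D
          rw [hK, mul_pow, pow_add t D 2]
          field_simp

lemma prod_neg_odd {c : ℕ} (hc : Odd c) (f : ℕ → ℝ) :
    ∏ j ∈ Finset.range c, -f j = -∏ j ∈ Finset.range c, f j := by
  rw [Finset.prod_congr rfl (fun j _ => neg_eq_neg_one_mul (f j)), Finset.prod_mul_distrib,
    Finset.prod_const, Finset.card_range, hc.neg_one_pow, neg_one_mul]

/-- The antisymmetry `rfun (-n - t) = -rfun t` makes the coefficient sums of even order vanish;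
the one of order `1` vanishes because `rfun` decays faster than `1 / t`. The factor `2` comes from
symmetrizing the coefficients. -/
lemma rfun_partial_odd {N σ n d : ℕ} (hn : 1 ≤ n) (h2 : Even n) (hσ : 1 ≤ σ)
    (hdeg : 15 * tri N * n + N + 2 ≤ σ * (n + 1)) (hpar : Odd (N + σ)) (hd0 : d ≠ 0)
    (hd : ∀ l, 1 ≤ l → l ≤ n → l ∣ d) :
    ∃ B : ℕ → ℕ → ℤ, (∀ t : ℝ, (∀ k : ℕ, k ≤ n → t + k ≠ 0) →
      2 * (d : ℝ) ^ σ * rfun N σ n t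
        = ∑ i ∈ Finset.Icc 1 σ, ∑ k ∈ Finset.range (n + 1), B i k * (d / (t + k)) ^ i) ∧
      (∀ i, Even i → ∑ k ∈ Finset.range (n + 1), B i k = 0) ∧
      ∑ k ∈ Finset.range (n + 1), B 1 k = 0 := by
  obtain ⟨A, p, hA⟩ := rfun_partial (N := N) hn hσ hd
  have hn' : (1 : ℝ) ≤ n := by exact_mod_cast hn
  have hpos : ∀ᶠ t : ℝ in atTop, 0 < t := eventually_gt_atTop 0
  have hdom : ∀ t : ℝ, 0 < t → ∀ k : ℕ, k ≤ n → t + k ≠ 0 := fun t ht k _ => by positivity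
  have hR1 := tendsto_mul_rfun hn hdeg
  have hR0 : Tendsto (fun t => rfun N σ n t) atTop (𝓝 0) := by
    have := hR1.mul tendsto_inv_atTop_zero
    rw [mul_zero] at this
    refine this.congr' ?_
    filter_upwards [hpos] with t ht
    field_simp
  have hfr : ∀ k : ℕ, Tendsto (fun t : ℝ => d / (t + k)) atTop (𝓝 0) := fun k =>
    tendsto_const_nhds.div_atTop (tendsto_atTop_add_const_right _ _ tendsto_id)
  have hfr1 : ∀ k : ℕ, Tendsto (fun t : ℝ => t * (d / (t + k))) atTop (𝓝 d) := fun k => by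
    have h : Tendsto (fun t : ℝ => (d : ℝ) - k * (d / (t + k))) atTop (𝓝 (d - k * 0)) :=
      tendsto_const_nhds.sub ((hfr k).const_mul _)
    rw [mul_zero, sub_zero] at h
    refine h.congr' ?_
    filter_upwards [hpos] with t ht
    field_simp
    ring
  -- a polynomial tending to `0` at infinity is zero
  have hp : p = 0 := by
    have hlim : Tendsto (fun t : ℝ => p.eval t) atTop (𝓝 0) := by
      have h1 : Tendsto (fun t : ℝ => (d : ℝ) ^ σ * rfun N σ n t
          - ∑ i ∈ Finset.Icc 1 σ, ∑ k ∈ Finset.range (n + 1), A i k * (d / (t + k)) ^ i) atTop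
          (𝓝 ((d : ℝ) ^ σ * 0 - ∑ i ∈ Finset.Icc 1 σ, ∑ k ∈ Finset.range (n + 1), (A i k : ℝ) * 0 ^ i)) :=
        (hR0.const_mul _).sub (tendsto_finsetSum _ fun i _ => tendsto_finsetSum _ fun k _ =>
          ((hfr k).pow i).const_mul _)
      have h2 : (d : ℝ) ^ σ * 0 - ∑ i ∈ Finset.Icc 1 σ, ∑ k ∈ Finset.range (n + 1),
          (A i k : ℝ) * 0 ^ i = 0 := by
        rw [mul_zero, zero_sub, neg_eq_zero]
        refine Finset.sum_eq_zero fun i hi => Finset.sum_eq_zero fun k _ => ?_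
        rw [zero_pow (by have := (Finset.mem_Icc.1 hi).1; omega), mul_zero]
      rw [h2] at h1
      refine h1.congr' ?_
      filter_upwards [hpos] with t ht
      rw [hA t (hdom t ht)]; ring
    exact Polynomial.leadingCoeff_eq_zero.1 (Polynomial.tendsto_nhds_iff p |>.1 hlim).1
  subst hp
  simp only [eval_zero, add_zero] at hA
  -- multiply the expansion by `t` and let `t` tend to infinity
  have hA1 : ∑ k ∈ Finset.range (n + 1), A 1 k = 0 := by
    have h1 : Tendsto (fun t : ℝ => ∑ i ∈ Finset.Icc 1 σ, ∑ k ∈ Finset.range (n + 1),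
        A i k * ((t * (d / (t + k))) * (d / (t + k)) ^ (i - 1))) atTop
        (𝓝 (∑ i ∈ Finset.Icc 1 σ, ∑ k ∈ Finset.range (n + 1), A i k * (d * 0 ^ (i - 1)))) :=
      tendsto_finsetSum _ fun i _ => tendsto_finsetSum _ fun k _ =>
          ((hfr1 k).mul ((hfr k).pow (i - 1))).const_mul _
    have h2 : Tendsto (fun t : ℝ => ∑ i ∈ Finset.Icc 1 σ, ∑ k ∈ Finset.range (n + 1),
        A i k * ((t * (d / (t + k))) * (d / (t + k)) ^ (i - 1))) atTop (𝓝 ((d : ℝ) ^ σ * 0)) := by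
      refine (hR1.const_mul _).congr' ?_
      filter_upwards [hpos] with t ht
      rw [mul_left_comm, hA t (hdom t ht), Finset.mul_sum]
      refine Finset.sum_congr rfl fun i hi => ?_
      rw [Finset.mul_sum]
      refine Finset.sum_congr rfl fun k _ => ?_
      obtain ⟨i, rfl⟩ : ∃ i', i = i' + 1 := ⟨i - 1, by have := (Finset.mem_Icc.1 hi).1; omega⟩
      rw [Nat.add_sub_cancel, pow_succ]; ring
    have h3 := tendsto_nhds_unique h1 h2
    rw [mul_zero, Finset.sum_eq_single_of_mem 1 (Finset.mem_Icc.2 ⟨le_rfl, hσ⟩)] at h3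
    · simp only [Nat.sub_self, pow_zero, mul_one, ← Finset.sum_mul] at h3
      rcases mul_eq_zero.1 h3 with h | h
      · exact_mod_cast h
      · exact absurd (by exact_mod_cast h) hd0
    · intro i hi h
      refine Finset.sum_eq_zero fun k _ => ?_
      rw [zero_pow (by have := (Finset.mem_Icc.1 hi).1; omega)]; ring
  have hflip : ∀ i, ∑ k ∈ Finset.range (n + 1), A i (n - k) = ∑ k ∈ Finset.range (n + 1), A i k := by
    intro i
    have := Finset.sum_range_reflect (fun k => A i k) (n + 1)
    rw [← this]
    refine Finset.sum_congr rfl fun k _ => ?_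
    congr 1
  -- the coefficients of `rfun t - rfun (-n - t) = 2 * rfun t`
  refine ⟨fun i k => A i k - (-1) ^ i * A i (n - k), fun t ht => ?_, fun i hi => ?_, ?_⟩
  · have hnum : num N n (-n - t) = (-1) ^ N * num N n t := by
      unfold num
      have e : ((-1 : ℝ)) ^ N = ∏ b ∈ Finset.Icc 1 N, (-1 : ℝ) := by simp
      rw [e, ← Finset.prod_mul_distrib]
      refine Finset.prod_congr rfl fun b _ => ?_
      rw [← Finset.prod_range_reflect, neg_one_mul, ← prod_neg_odd (h2.mul_left _).add_one]
      refine Finset.prod_congr rfl fun j hj => ?_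
      have := Finset.mem_range.1 hj
      have e3 : ((15 * b * n + 1 - 1 - j : ℕ) : ℝ) = 15 * b * n - j := by
        rw [Nat.add_sub_cancel, Nat.cast_sub (by omega)]; push_cast; ring
      rw [e3]; ring
    have hden : ∏ k ∈ Finset.range (n + 1), (-n - t + (k : ℝ))
        = - ∏ k ∈ Finset.range (n + 1), (t + (k : ℝ)) := by
      rw [← Finset.prod_range_reflect, ← prod_neg_odd h2.add_one]
      refine Finset.prod_congr rfl fun j hj => ?_
      have := Finset.mem_range.1 hj
      have e3 : ((n + 1 - 1 - j : ℕ) : ℝ) = n - j := by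
        rw [Nat.add_sub_cancel, Nat.cast_sub (by omega)]
      rw [e3]; ring
    have hR : rfun N σ n (-n - t) = - rfun N σ n t := by
      unfold rfun
      rw [hnum, hden, div_neg, neg_pow (_ / _), mul_div_assoc]
      have := hpar.neg_one_pow (α := ℝ)
      rw [pow_add] at this
      linear_combination (num N n t / (n.factorial : ℝ) ^ (15 * tri N)
        * ((n.factorial : ℝ) / ∏ k ∈ Finset.range (n + 1), (t + k)) ^ σ) * this
    have ht' : ∀ k : ℕ, k ≤ n → (-n - t) + k ≠ 0 := by
      intro k hk h0
      apply ht (n - k) (by omega)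
      rw [Nat.cast_sub hk]; linarith
    have e1 := hA t ht
    have e2 := hA _ ht'
    rw [hR] at e2
    have e3 : ∑ i ∈ Finset.Icc 1 σ, ∑ k ∈ Finset.range (n + 1), (A i k : ℝ) * (d / (-n - t + k)) ^ i
        = ∑ i ∈ Finset.Icc 1 σ, ∑ k ∈ Finset.range (n + 1),
          ((-1) ^ i * (A i (n - k) : ℝ)) * (d / (t + k)) ^ i := by
      refine Finset.sum_congr rfl fun i _ => ?_
      rw [← Finset.sum_range_reflect]
      refine Finset.sum_congr rfl fun k hk => ?_
      have := Finset.mem_range.1 hk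
      have e4 : ((n + 1 - 1 - k : ℕ) : ℝ) = n - k := by
        rw [Nat.add_sub_cancel, Nat.cast_sub (by omega)]
      have e5 : (d : ℝ) / (-n - t + (n - k)) = (-1) * (d / (t + k)) := by
        rw [show (-(n : ℝ) - t + (n - k)) = -(t + k) by ring, div_neg]; ring
      rw [e4, Nat.add_sub_cancel, e5, mul_pow]; ring
    rw [e3] at e2
    have : 2 * (d : ℝ) ^ σ * rfun N σ n t
        = (d : ℝ) ^ σ * rfun N σ n t - (d : ℝ) ^ σ * -rfun N σ n t := by ring
    rw [this, e1, e2, ← Finset.sum_sub_distrib]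
    refine Finset.sum_congr rfl fun i _ => ?_
    rw [← Finset.sum_sub_distrib]
    refine Finset.sum_congr rfl fun k _ => ?_
    push_cast; ring
  · rw [Finset.sum_sub_distrib, ← Finset.mul_sum, hflip, hi.neg_one_pow]; ring
  · rw [Finset.sum_sub_distrib, ← Finset.mul_sum, hflip, hA1]; simp

end OddZeta

/-! ### Linear forms in zeta values -/

namespace OddZeta
open Filter Topology

lemma zetaR_hasSum {i : ℕ} (hi : 2 ≤ i) :
    HasSum (fun m : ℕ => 1 / ((m : ℝ) + 1) ^ i) (zetaR i) := by
  have hs : Summable (fun m : ℕ => 1 / (m : ℝ) ^ i) := Real.summable_one_div_nat_pow.2 (by omega)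
  have h1 : zetaR i = ∑' m : ℕ, 1 / (m : ℝ) ^ i := by
    unfold zetaR
    rw [zeta_nat_eq_tsum_of_gt_one (by omega)]
    rw [show (∑' m : ℕ, 1 / (m : ℂ) ^ i) = ((∑' m : ℕ, 1 / (m : ℝ) ^ i : ℝ) : ℂ) by
      push_cast; rfl]
    exact Complex.ofReal_re _
  have h2 := (hasSum_nat_add_iff' 1).2 hs.hasSum
  rw [← h1] at h2
  have h0 : (0 : ℝ) ^ i = 0 := zero_pow (by omega)
  simpa [h0] using h2

/-- `1 / (m + 1 + K) ^ i`, corrected for `i = 1` so that the sum over `m` converges. -/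
noncomputable def tailTerm (i K m : ℕ) : ℝ :=
  1 / ((m : ℝ) + 1 + K) ^ i - if i = 1 then 1 / ((m : ℝ) + 1) else 0

lemma tailTerm_hasSum {i : ℕ} (hi : 1 ≤ i) (K : ℕ) :
    HasSum (tailTerm i K)
      ((if i = 1 then 0 else zetaR i) - ∑ l ∈ Finset.range K, 1 / ((l : ℝ) + 1) ^ i) := by
  by_cases h : i = 1
  · subst h
    unfold tailTerm
    simp only [if_true, pow_one]
    induction K with
    | zero => simp
    | succ K ih =>
      have hstep : HasSum (fun m : ℕ => 1 / ((m : ℝ) + 1 + K) - 1 / (((m + 1 : ℕ) : ℝ) + 1 + K))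
          (1 / ((K : ℝ) + 1)) := by
        rw [hasSum_iff_tendsto_nat_of_nonneg]
        · have : Tendsto (fun m : ℕ => 1 / ((K : ℝ) + 1) - 1 / ((m : ℝ) + 1 + K)) atTop
              (𝓝 (1 / ((K : ℝ) + 1) - 0)) := by
            refine tendsto_const_nhds.sub (tendsto_const_nhds.div_atTop ?_)
            exact tendsto_atTop_add_const_right _ _
              (tendsto_atTop_add_const_right _ _ tendsto_natCast_atTop_atTop)
          rw [sub_zero] at this
          refine this.congr fun m => ?_
          rw [Finset.sum_range_sub' (fun m : ℕ => 1 / ((m : ℝ) + 1 + K))]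
          simp [add_comm]
        · intro m
          rw [sub_nonneg]
          refine one_div_le_one_div_of_le (by positivity) ?_
          push_cast; linarith
      convert! ih.sub hstep using 1
      · ext m
        push_cast
        ring
      · rw [Finset.sum_range_succ]; ring
  · unfold tailTerm
    simp only [if_neg h, sub_zero]
    have := (hasSum_nat_add_iff' K).2 (zetaR_hasSum (i := i) (by omega))
    convert! this using 1
    ext m
    push_cast
    ring

/-- The rational part of the linear form attached to the denominator `b`. -/
noncomputable def ratPart (B : ℕ → ℕ → ℤ) (σ n d b : ℕ) : ℝ :=
  ∑ i ∈ Finset.Icc 1 σ, ∑ k ∈ Finset.range (n + 1),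
    B i k * ∑ l ∈ Finset.range (b * k), ((d * b : ℝ) / (l + 1)) ^ i

/-- The sum over the fractions `(m + 1) / b` is a linear form in `1` and zeta values; up to the factor
`b ^ i` the coefficient of `ζ(i)` is the same for all `b`. The harmonic parts of order `1` cancel
since `∑ B 1 k = 0`. -/
lemma linear_form {B : ℕ → ℕ → ℤ} {σ n d b : ℕ} (hb : 1 ≤ b)
    (hB : ∑ k ∈ Finset.range (n + 1), B 1 k = 0) :
    HasSum (fun m : ℕ => ∑ i ∈ Finset.Icc 1 σ, ∑ k ∈ Finset.range (n + 1),
        B i k * ((d : ℝ) / (((m : ℝ) + 1) / b + k)) ^ i)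
      (∑ i ∈ Finset.Icc 1 σ, (d * b : ℝ) ^ i * (if i = 1 then 0 else zetaR i)
          * ((∑ k ∈ Finset.range (n + 1), B i k : ℤ) : ℝ) - ratPart B σ n d b) := by
  have hb0 : (0 : ℝ) < b := by exact_mod_cast hb
  have key : ∀ i ∈ Finset.Icc 1 σ, HasSum (fun m : ℕ => ∑ k ∈ Finset.range (n + 1),
        B i k * ((d : ℝ) / (((m : ℝ) + 1) / b + k)) ^ i)
      ((d * b : ℝ) ^ i * (if i = 1 then 0 else zetaR i)
          * ((∑ k ∈ Finset.range (n + 1), B i k : ℤ) : ℝ)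
        - ∑ k ∈ Finset.range (n + 1), B i k * ∑ l ∈ Finset.range (b * k), ((d * b : ℝ) / (l + 1)) ^ i) := by
    intro i hi
    have hi1 := (Finset.mem_Icc.1 hi).1
    have h := hasSum_sum (s := Finset.range (n + 1)) fun k _ =>
      (tailTerm_hasSum hi1 (b * k)).mul_left ((B i k : ℝ) * (d * b) ^ i)
    have efr : ∀ m k : ℕ, (d : ℝ) / (((m : ℝ) + 1) / b + k) = d * b / ((m : ℝ) + 1 + (b * k : ℕ)) := by
      intro m k
      push_cast
      field_simp
    have s1 : (fun m : ℕ => ∑ k ∈ Finset.range (n + 1),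
        B i k * ((d : ℝ) / (((m : ℝ) + 1) / b + k)) ^ i) = fun m => ∑ k ∈ Finset.range (n + 1),
          (B i k : ℝ) * (d * b) ^ i * tailTerm i (b * k) m := by
      ext m
      simp only [efr, tailTerm, div_pow, mul_sub, Finset.sum_sub_distrib]
      have : ∑ k ∈ Finset.range (n + 1), (B i k : ℝ) * (d * b) ^ i *
          (if i = 1 then 1 / ((m : ℝ) + 1) else 0) = 0 := by
        by_cases h1 : i = 1
        · subst h1
          rw [← Finset.sum_mul, ← Finset.sum_mul]
          have : ((∑ k ∈ Finset.range (n + 1), B 1 k : ℤ) : ℝ) = 0 := by exact_mod_cast hB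
          push_cast at this
          rw [this]; ring
        · simp [h1]
      rw [this, sub_zero]
      refine Finset.sum_congr rfl fun k _ => ?_
      ring
    rw [s1]
    convert! h using 1
    · simp only [mul_sub, Finset.sum_sub_distrib]
      congr 1
      · push_cast
        rw [Finset.mul_sum]
        refine Finset.sum_congr rfl fun k _ => ?_
        ring
      · refine Finset.sum_congr rfl fun k _ => ?_
        rw [Finset.mul_sum, Finset.mul_sum]
        refine Finset.sum_congr rfl fun l _ => ?_
        rw [div_pow]; ring
  rw [ratPart, ← Finset.sum_sub_distrib]
  exact hasSum_sum key

/-- If the denominators of the terms of a vanishing sum are pairwise coprime, every subsum is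
an integer. -/
lemma subsum_int (S : Finset ℕ) (P : ℕ → Prop) [DecidablePred P] (F : ℕ → ℝ) (e : ℕ → ℤ)
    (hF : ∀ k ∈ S, ∃ z : ℤ, F k * e k = z) (h0 : ∑ k ∈ S, F k = 0)
    (hc : ∀ k ∈ S, ∀ k' ∈ S, k ≠ k' → IsCoprime (e k) (e k')) :
    ∃ z : ℤ, ∑ k ∈ S with P k, F k = z := by
  -- the product of the denominators over `T` clears the sum over `T`
  have clear : ∀ T : Finset ℕ, T ⊆ S → ∃ z : ℤ, (∏ k ∈ T, (e k : ℝ)) * ∑ k ∈ T, F k = z := by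
    intro T
    induction T using Finset.induction_on with
    | empty => exact fun _ => ⟨0, by simp⟩
    | insert a T ha ih =>
      intro hT
      obtain ⟨z, hz⟩ := ih ((Finset.subset_insert a T).trans hT)
      obtain ⟨y, hy⟩ := hF a (hT (Finset.mem_insert_self a T))
      refine ⟨e a * z + y * ∏ k ∈ T, e k, ?_⟩
      rw [Finset.prod_insert ha, Finset.sum_insert ha]
      push_cast
      rw [← hz, ← hy]
      ring
  obtain ⟨y, hy⟩ := clear (S.filter P) (Finset.filter_subset _ _)
  obtain ⟨z, hz⟩ := clear (S.filter (fun k => ¬ P k)) (Finset.filter_subset _ _)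
  have hcop : IsCoprime (∏ k ∈ S with P k, e k) (∏ k ∈ S with ¬ P k, e k) := by
    refine IsCoprime.prod_left fun k hk => IsCoprime.prod_right fun k' hk' => ?_
    rw [Finset.mem_filter] at hk hk'
    refine hc k hk.1 k' hk'.1 ?_
    rintro rfl
    exact hk'.2 hk.2
  -- the subsum equals minus its complement, so two coprime integers clear its denominator
  obtain ⟨u, v, huv⟩ := hcop
  have huv' : (u : ℝ) * (∏ k ∈ S with P k, (e k : ℝ)) + v * (∏ k ∈ S with ¬ P k, (e k : ℝ)) = 1 := by
    exact_mod_cast huv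
  have hsum := Finset.sum_filter_add_sum_filter_not S P F
  rw [h0] at hsum
  refine ⟨u * y - v * z, ?_⟩
  push_cast
  rw [← hy, ← hz]
  linear_combination (-(∑ k ∈ S with P k, F k)) * huv'
    + (v * (∏ k ∈ S with ¬ P k, (e k : ℝ))) * hsum

/-- The reduced denominators of the `d b / (b k - q)` are pairwise coprime: a common prime factor
would divide `b (k - k')`, a divisor of `d b`, to a higher power than `d b`. -/
lemma reduced_coprime {D x y c₁ c₂ e₁ e₂ g₁ g₂ : ℤ} (hD : D ≠ 0) (hx : x ≠ 0)
    (hx1 : x = g₁ * e₁) (hD1 : D = g₁ * c₁) (hy1 : y = g₂ * e₂) (hD2 : D = g₂ * c₂)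
    (h1 : IsCoprime e₁ c₁) (h2 : IsCoprime e₂ c₂) (hxy : x - y ∣ D) : IsCoprime e₁ e₂ := by
  refine isCoprime_of_prime_dvd ?_ ?_
  · rintro ⟨rfl, -⟩
    exact hx (by simpa using hx1)
  · intro p hp hpe hpe'
    obtain ⟨m, hm, hv⟩ := (FiniteMultiplicity.of_prime_left hp hD).exists_eq_pow_mul_and_not_dvd
    set v := multiplicity p D
    have main : ∀ {z c e g : ℤ}, z = g * e → D = g * c → IsCoprime e c → p ∣ e → p ^ (v + 1) ∣ z := by
      intro z c e g hz hc hco hpe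
      have hpc : IsCoprime p c := by
        obtain ⟨w, rfl⟩ := hpe
        exact hco.of_mul_left_left
      have : p ^ v ∣ g * c := ⟨m, by rw [← hc, hm]⟩
      have := (hpc.pow_left (m := v)).dvd_of_dvd_mul_right this
      rw [hz, pow_succ]
      exact mul_dvd_mul this hpe
    have h3 := (dvd_sub (main hx1 hD1 h1 hpe) (main hy1 hD2 h2 hpe')).trans hxy
    rw [hm, pow_succ] at h3
    exact hv ((mul_dvd_mul_iff_left (pow_ne_zero v hp.ne_zero)).1 h3)

lemma rfun_eq_zero {N σ n b q : ℕ} (hb : 1 ≤ b) (hbN : b ≤ N) (hq : q ≤ b * n) :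
    rfun N σ n (-(q / b : ℝ)) = 0 := by
  have hb0 : (b : ℝ) ≠ 0 := by positivity
  have : num N n (-(q / b : ℝ)) = 0 := by
    refine Finset.prod_eq_zero (Finset.mem_Icc.2 ⟨hb, hbN⟩) ?_
    refine Finset.prod_eq_zero (i := 7 * b * n + q) (Finset.mem_range.2 (by nlinarith)) ?_
    push_cast
    field_simp
    ring
  simp [rfun, this]

/-- The rational part is an integer. Writing `l = b k - 1 - q` and grouping by `q`, each inner sum
runs over the `k` with `q < b k`. If `b ∣ q` it is integral term by term, as `k - q / b` divides
`d`. Otherwise it is a subsum of the expansion of `2 d ^ σ * rfun (-q / b) = 0`, whose terms have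
pairwise coprime denominators. -/
lemma ratPart_int {B : ℕ → ℕ → ℤ} {N σ n d b : ℕ} (hb : 1 ≤ b) (hbN : b ≤ N) (hd0 : d ≠ 0)
    (hd : ∀ l, 1 ≤ l → l ≤ n → l ∣ d)
    (hB : ∀ t : ℝ, (∀ k : ℕ, k ≤ n → t + k ≠ 0) → 2 * (d : ℝ) ^ σ * rfun N σ n t
        = ∑ i ∈ Finset.Icc 1 σ, ∑ k ∈ Finset.range (n + 1), B i k * (d / (t + k)) ^ i) :
    ∃ z : ℤ, ratPart B σ n d b = z := by
  have hb0 : (0 : ℝ) < b := by exact_mod_cast hb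
  set F : ℕ → ℕ → ℝ := fun q k => ∑ i ∈ Finset.Icc 1 σ, B i k * ((d * b : ℝ) / (b * k - q)) ^ i
    with hFdef
  have e1 : ratPart B σ n d b
      = ∑ q ∈ Finset.range (b * n), ∑ k ∈ Finset.range (n + 1) with q < b * k, F q k := by
    have s1 : ratPart B σ n d b = ∑ k ∈ Finset.range (n + 1), ∑ q ∈ Finset.range (b * k), F q k := by
      unfold ratPart
      rw [Finset.sum_comm]
      refine Finset.sum_congr rfl fun k _ => ?_
      rw [hFdef, Finset.sum_comm]
      refine Finset.sum_congr rfl fun i _ => ?_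
      rw [Finset.mul_sum, ← Finset.sum_range_reflect]
      refine Finset.sum_congr rfl fun q hq => ?_
      have hq' := Finset.mem_range.1 hq
      congr 3
      rw [Nat.sub_sub, Nat.cast_sub (by omega)]
      push_cast; ring
    rw [s1]
    refine Finset.sum_comm' fun k q => ?_
    simp only [Finset.mem_range, Finset.mem_filter]
    constructor
    · rintro ⟨h1, h2⟩
      exact ⟨⟨h1, h2⟩, h2.trans_le (Nat.mul_le_mul_left b (by omega))⟩
    · rintro ⟨h1, -⟩
      exact h1
  have e2 : ∀ q ∈ Finset.range (b * n), ∃ z : ℤ,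
      ∑ k ∈ Finset.range (n + 1) with q < b * k, F q k = z := by
    intro q hq
    have hqn := Finset.mem_range.1 hq
    by_cases hbq : b ∣ q
    · obtain ⟨q', rfl⟩ := hbq
      have : ∀ k ∈ (Finset.range (n + 1)).filter (fun k => b * q' < b * k), ∃ z : ℤ, F (b * q') k = z := by
        intro k hk
        simp only [Finset.mem_filter, Finset.mem_range] at hk
        have hlt : q' < k := lt_of_mul_lt_mul_left hk.2 (Nat.zero_le b)
        obtain ⟨c, hc⟩ := hd (k - q') (by omega) (by omega)
        refine ⟨∑ i ∈ Finset.Icc 1 σ, B i k * (c : ℤ) ^ i, ?_⟩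
        push_cast
        refine Finset.sum_congr rfl fun i _ => ?_
        congr 2
        have hc' : (d : ℝ) = ((k : ℝ) - q') * c := by
          rw [← Nat.cast_sub hlt.le]; exact_mod_cast hc
        have hne : (k : ℝ) - q' ≠ 0 := by
          rw [sub_ne_zero]; exact_mod_cast hlt.ne'
        push_cast
        rw [show (b : ℝ) * k - b * q' = b * (k - q') by ring, hc']
        field_simp
      choose! z hz using this
      exact ⟨∑ k ∈ Finset.range (n + 1) with b * q' < b * k, z k, by
        rw [Finset.sum_congr rfl hz]; push_cast; rfl⟩
    · have hne : ∀ k : ℕ, (b * k - q : ℤ) ≠ 0 := by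
        intro k h0
        apply hbq
        exact ⟨k, by exact_mod_cast (sub_eq_zero.1 h0).symm⟩
      have hneR : ∀ k : ℕ, (b * k - q : ℝ) ≠ 0 := fun k => by exact_mod_cast hne k
      have hg : ∀ k : ℕ, ∃ g e c : ℤ, (b * k - q : ℤ) = g * e ∧ (d * b : ℤ) = g * c ∧ IsCoprime e c := by
        intro k
        obtain ⟨e, c, hco, h1, h2⟩ := Int.exists_gcd_one
          (Int.gcd_pos_of_ne_zero_left (d * b : ℤ) (hne k))
        exact ⟨_, e, c, h1.trans (mul_comm _ _), h2.trans (mul_comm _ _),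
          Int.isCoprime_iff_gcd_eq_one.2 hco⟩
      choose g e c hge hgc hco using hg
      have hD : (d * b : ℤ) ≠ 0 := by
        have : (b : ℤ) ≠ 0 := by positivity
        exact mul_ne_zero (by exact_mod_cast hd0) this
      refine subsum_int (Finset.range (n + 1)) (fun k => q < b * k) (F q) (fun k => e k ^ σ) ?_ ?_ ?_
      · intro k _
        refine ⟨∑ i ∈ Finset.Icc 1 σ, B i k * (c k ^ i * e k ^ (σ - i)), ?_⟩
        simp only [hFdef]
        push_cast
        rw [Finset.sum_mul]
        refine Finset.sum_congr rfl fun i hi => ?_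
        have hi2 := (Finset.mem_Icc.1 hi).2
        have r1 : (b * k - q : ℝ) = g k * e k := by exact_mod_cast hge k
        have r2 : (d * b : ℝ) = g k * c k := by exact_mod_cast hgc k
        have h0 := hneR k
        rw [r1] at h0
        obtain ⟨hg0, he0⟩ := mul_ne_zero_iff.1 h0
        rw [r1, r2, mul_div_mul_left _ _ hg0, div_pow, ← Nat.sub_add_cancel hi2, pow_add,
          Nat.add_sub_cancel]
        field_simp
      · have ht : ∀ k : ℕ, k ≤ n → -(q / b : ℝ) + k ≠ 0 := by
          intro k _ h0
          apply hneR k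
          field_simp at h0
          linarith
        have h := hB _ ht
        rw [rfun_eq_zero hb hbN hqn.le, mul_zero, Finset.sum_comm] at h
        rw [h]
        refine Finset.sum_congr rfl fun k _ => ?_
        refine Finset.sum_congr rfl fun i _ => ?_
        congr 2
        have := hneR k
        have h3 : -(q / b : ℝ) + k = (b * k - q) / b := by field_simp; ring
        rw [h3]
        field_simp
      · intro k hk k' hk' hkk
        refine IsCoprime.pow ?_
        refine reduced_coprime hD (hne k) (hge k) (hgc k) (hge k') (hgc k') (hco k) (hco k') ?_
        have hk1 := Finset.mem_range.1 hk
        have hk2 := Finset.mem_range.1 hk'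
        rw [show (b * k - q : ℤ) - (b * k' - q) = (k - k') * b by ring]
        refine mul_dvd_mul_right ?_ _
        rw [← Int.natAbs_dvd]
        exact Int.natCast_dvd_natCast.2 (hd _ (by omega) (by omega))
  choose! z hz using e2
  exact ⟨∑ q ∈ Finset.range (b * n), z q, by
    rw [e1, Finset.sum_congr rfl hz]; push_cast; rfl⟩

end OddZeta

/-! ### Integer weights killing prescribed powers -/

namespace OddZeta
open Polynomial

/-- Each term beyond the first contributes at most one sign variation. -/
lemma signVariations_lt_card {P : ℚ[X]} (hP : P ≠ 0) : P.signVariations + 1 ≤ P.support.card := by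
  induction h : P.support.card using Nat.strong_induction_on generalizing P with
  | _ c ih =>
    subst h
    by_cases he : P.eraseLead = 0
    · have h1 := P.eraseLead_add_monomial_natDegree_leadingCoeff
      rw [he, zero_add] at h1
      have h2 : P.signVariations = 0 := by rw [← h1, signVariations_monomial]
      have h3 : 0 < P.support.card := Finset.card_pos.2 (support_nonempty.2 hP)
      omega
    · have h1 := eraseLead_support_card_lt hP
      have h2 := ih _ h1 he rfl
      have h3 := signVariations_le_eraseLead_succ P
      omega

/-- A nonzero polynomial with few terms has few positive roots. -/
lemma card_lt_of_roots {P : ℚ[X]} (hP : P ≠ 0) (N : ℕ)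
    (hr : ∀ b ∈ Finset.Icc 1 N, P.eval (b : ℚ) = 0) : N + 1 ≤ P.support.card := by
  refine le_trans (Nat.succ_le_succ ?_) (signVariations_lt_card hP)
  refine le_trans ?_ (roots_countP_pos_le_signVariations P)
  classical
  have hsub : ((Finset.Icc 1 N).image (fun b : ℕ => (b : ℚ))).val
      ≤ P.roots.filter (fun x => 0 < x) := by
    rw [Multiset.le_iff_subset (Finset.nodup _)]
    intro x hx
    obtain ⟨b, hb, rfl⟩ := Finset.mem_image.1 (show x ∈ (Finset.Icc 1 N).image (fun b : ℕ => (b : ℚ)) from hx)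
    rw [Multiset.mem_filter, mem_roots hP]
    refine ⟨hr b hb, ?_⟩
    exact_mod_cast (Finset.mem_Icc.1 hb).1
  have := Multiset.card_le_card hsub
  rw [← Multiset.countP_eq_card_filter] at this
  refine le_trans (le_of_eq ?_) this
  rw [Finset.card_val, Finset.card_image_of_injective _ Nat.cast_injective]
  simp

/-- Fewer than `N` exponents can be eliminated from the power sums over `1, …, N` while keeping
the exponent `1`: otherwise `X` would agree at `1, …, N` with a combination of fewer than `N`
other monomials, against Descartes' rule of signs. -/
lemma exists_weights (N : ℕ) (I : Finset ℕ) (hI : I.card + 1 ≤ N) (hI1 : 1 ∉ I) :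
    ∃ w : ℕ → ℤ, (∀ i ∈ I, ∑ b ∈ Finset.Icc 1 N, w b * (b : ℤ) ^ i = 0) ∧
      ∑ b ∈ Finset.Icc 1 N, w b * (b : ℤ) ≠ 0 := by
  classical
  let L : ℕ → (ℕ → ℚ) →ₗ[ℚ] ℚ := fun i =>
    ∑ b ∈ Finset.Icc 1 N, ((b : ℚ) ^ i) • LinearMap.proj b
  have hL : ∀ i w, L i w = ∑ b ∈ Finset.Icc 1 N, (b : ℚ) ^ i * w b := by
    intro i w
    simp [L]
  have hnot : ¬ (⨅ i : I, (L i).ker ≤ (L 1).ker) := by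
    intro hle
    obtain ⟨c, hc⟩ := (Submodule.mem_span_range_iff_exists_fun ℚ).1 (mem_span_of_iInf_ker_le_ker hle)
    set P : ℚ[X] := X - ∑ i : I, C (c i) * X ^ (i : ℕ) with hPdef
    have hP1 : P.coeff 1 = 1 := by
      rw [hPdef, coeff_sub, coeff_X_one, finsetSum_coeff, Finset.sum_eq_zero, sub_zero]
      intro i _
      rw [coeff_C_mul, coeff_X_pow, if_neg, mul_zero]
      intro h
      exact hI1 (h ▸ i.2)
    have hP : P ≠ 0 := by
      intro h
      rw [h] at hP1
      simp at hP1
    have hsupp : P.support ⊆ insert 1 I := by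
      intro j hj
      rw [mem_support_iff, hPdef, coeff_sub, finsetSum_coeff] at hj
      by_contra hjn
      rw [Finset.mem_insert, not_or] at hjn
      apply hj
      rw [coeff_X_of_ne_one hjn.1, Finset.sum_eq_zero, sub_zero]
      intro i _
      rw [coeff_C_mul, coeff_X_pow, if_neg, mul_zero]
      intro h
      exact hjn.2 (h ▸ i.2)
    have h1 := card_lt_of_roots hP N (by
      intro b hb
      have h := LinearMap.congr_fun hc (Pi.single b 1)
      have hsingle : ∀ i, L i (Pi.single b 1) = (b : ℚ) ^ i := by
        intro i
        rw [hL, Finset.sum_eq_single_of_mem b hb]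
        · simp
        · intro b' _ hne
          simp [hne]
      rw [LinearMap.sum_apply, hsingle, pow_one] at h
      simp only [LinearMap.smul_apply, hsingle, smul_eq_mul] at h
      rw [hPdef, eval_sub, eval_X, eval_finsetSum, sub_eq_zero, ← h]
      refine Finset.sum_congr rfl fun i _ => ?_
      rw [h]
      simp)
    have h2 := Finset.card_le_card hsupp
    have h3 := Finset.card_insert_le 1 I
    omega
  -- `w` is a rational solution; its denominators are cleared by `D`
  obtain ⟨w, hw, hw1⟩ := SetLike.not_le_iff_exists.1 hnot
  set D : ℕ := ∏ b ∈ Finset.Icc 1 N, (w b).den with hD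
  have hD0 : (D : ℚ) ≠ 0 := by
    rw [hD]
    exact_mod_cast Finset.prod_ne_zero_iff.2 fun b _ => (w b).den_nz
  have hz : ∀ b ∈ Finset.Icc 1 N, ∃ z : ℤ, (z : ℚ) = D * w b := by
    intro b hb
    obtain ⟨q, hq⟩ : (w b).den ∣ D := Finset.dvd_prod_of_mem _ hb
    refine ⟨q * (w b).num, ?_⟩
    rw [hq]
    push_cast
    rw [← Rat.den_mul_eq_num (w b)]
    ring
  choose! z hz using hz
  have hzs : ∀ i, ((∑ b ∈ Finset.Icc 1 N, z b * (b : ℤ) ^ i : ℤ) : ℚ) = D * L i w := by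
    intro i
    rw [hL, Finset.mul_sum]
    push_cast
    refine Finset.sum_congr rfl fun b hb => ?_
    rw [hz b hb]; ring
  refine ⟨z, fun i hi => ?_, fun h => ?_⟩
  · have h0 : L i w = 0 := by
      have := (Submodule.mem_iInf _).1 hw ⟨i, hi⟩
      exact LinearMap.mem_ker.1 this
    have := hzs i
    rw [h0, mul_zero] at this
    exact_mod_cast this
  · apply hw1
    rw [LinearMap.mem_ker]
    have := hzs 1
    simp only [pow_one] at this
    rw [h, Int.cast_zero] at this
    exact (mul_eq_zero.1 this.symm).resolve_left hD0

end OddZeta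

/-! ### The shifted function and its logarithmic derivative -/

namespace OddZeta
open Filter Topology

/-- `rfun` re-centred at the end of its range of zeros. -/
noncomputable def shifted (N σ n : ℕ) (y : ℝ) : ℝ := rfun N σ n (y + 7 * n)

/-- The logarithm of `shifted`, up to an additive constant. -/
noncomputable def logFun (N σ n : ℕ) (y : ℝ) : ℝ :=
  ∑ b ∈ Finset.Icc 1 N, ∑ j ∈ Finset.range (15 * b * n + 1), Real.log (b * y + j)
    - σ * ∑ k ∈ Finset.range (n + 1), Real.log (y + 7 * n + k)

/-- The logarithmic derivative of `shifted`. -/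
noncomputable def logDer (N σ n : ℕ) (y : ℝ) : ℝ :=
  ∑ b ∈ Finset.Icc 1 N, ∑ j ∈ Finset.range (15 * b * n + 1), (b : ℝ) / (b * y + j)
    - σ * ∑ k ∈ Finset.range (n + 1), 1 / (y + 7 * n + k)

lemma factor_pos {N b j : ℕ} {y : ℝ} (hb : b ∈ Finset.Icc 1 N) (hy : 0 < y) :
    0 < (b : ℝ) * y + j := by
  have : (0 : ℝ) < b := by exact_mod_cast (Finset.mem_Icc.1 hb).1
  positivity

/-- To the right of the last zero, `shifted` is positive with logarithm `logFun` plus a constant. -/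
lemma shifted_eq (N σ n : ℕ) : ∃ C : ℝ, 0 < C ∧ ∀ y : ℝ, 0 < y →
    shifted N σ n y = C * Real.exp (logFun N σ n y) := by
  refine ⟨(n.factorial : ℝ) ^ σ / (n.factorial : ℝ) ^ (15 * tri N), by positivity, fun y hy => ?_⟩
  have e1 : num N n (y + 7 * n)
      = Real.exp (∑ b ∈ Finset.Icc 1 N, ∑ j ∈ Finset.range (15 * b * n + 1), Real.log (b * y + j)) := by
    rw [Real.exp_sum, num]
    refine Finset.prod_congr rfl fun b hb => ?_
    rw [Real.exp_sum]
    refine Finset.prod_congr rfl fun j _ => ?_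
    rw [Real.exp_log (factor_pos hb hy), add_sub_cancel_right]
  have e2 : ∏ k ∈ Finset.range (n + 1), (y + 7 * n + (k : ℝ))
      = Real.exp (∑ k ∈ Finset.range (n + 1), Real.log (y + 7 * n + k)) := by
    rw [Real.exp_sum]
    refine Finset.prod_congr rfl fun k _ => ?_
    rw [Real.exp_log (by positivity)]
  rw [shifted, rfun, e1, e2, logFun, Real.exp_sub, Real.exp_nat_mul, div_pow]
  ring

lemma logFun_hasDerivAt (N σ n : ℕ) {y : ℝ} (hy : 0 < y) :
    HasDerivAt (logFun N σ n) (logDer N σ n y) y := by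
  unfold logFun logDer
  refine HasDerivAt.sub (HasDerivAt.fun_sum fun b hb => HasDerivAt.fun_sum fun j _ => ?_)
    (HasDerivAt.const_mul _ (HasDerivAt.fun_sum fun k _ => ?_))
  · have := (((hasDerivAt_id y).const_mul (b : ℝ)).add_const (j : ℝ)).log (factor_pos hb hy).ne'
    simpa using this
  · have := (((hasDerivAt_id y).add_const (7 * n : ℝ)).add_const (k : ℝ)).log
      (by simp only [id]; positivity)
    simpa using this

/-- The function `z / ((t - z) (t' - z))` has a nonnegative symmetrization on `(-t, t)`. -/
lemma phi_pair {t t' z : ℝ} (hz0 : 0 ≤ z) (hz : z < t) (ht : t ≤ t') :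
    0 ≤ z / ((t - z) * (t' - z)) + -z / ((t - -z) * (t' - -z)) := by
  have h1 : 0 < t - z := by linarith
  have h2 : 0 < t' - z := by linarith
  have h3 : 0 < t + z := by linarith
  have h4 : 0 < t' + z := by linarith
  have : z / ((t + z) * (t' + z)) ≤ z / ((t - z) * (t' - z)) :=
    div_le_div_of_nonneg_left hz0 (by positivity)
      (mul_le_mul (by linarith) (by linarith) h2.le h3.le)
  rw [sub_neg_eq_add, sub_neg_eq_add, neg_div]
  linarith

/-- Contribution of the zeros with denominator `b`, here `7 n - j / b` in the variable `t`. The first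
`14 b n + 1` of them are symmetric about `0` and contribute a nonnegative amount by `phi_pair`; each
of the remaining `b n` lies in `[-8 n, -7 n)` and is bounded below separately. -/
lemma phi_sum {b n : ℕ} {t t' : ℝ} (hb : 1 ≤ b) (ht : 7 * n < t) (htt : t ≤ t') :
    -(b * n * (8 * n) / ((t + 7 * n) * (t' + 7 * n)))
      ≤ ∑ j ∈ Finset.range (15 * b * n + 1),
        (7 * n - j / b : ℝ) / ((t - (7 * n - j / b)) * (t' - (7 * n - j / b))) := by
  have hb0 : (0 : ℝ) < b := by exact_mod_cast hb
  have hn0 : (0 : ℝ) ≤ n := Nat.cast_nonneg n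
  set φ : ℝ → ℝ := fun z => z / ((t - z) * (t' - z)) with hφ
  have e : 15 * b * n + 1 = (14 * b * n + 1) + b * n := by ring
  rw [e, Finset.sum_range_add]
  have h1 : 0 ≤ ∑ j ∈ Finset.range (14 * b * n + 1), φ (7 * n - j / b) := by
    have hr := Finset.sum_range_reflect (fun j : ℕ => φ (7 * n - j / b)) (14 * b * n + 1)
    have hr' : ∑ j ∈ Finset.range (14 * b * n + 1), φ (-(7 * n - j / b))
        = ∑ j ∈ Finset.range (14 * b * n + 1), φ (7 * n - j / b) := by
      rw [← hr]
      refine Finset.sum_congr rfl fun j hj => ?_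
      have := Finset.mem_range.1 hj
      congr 1
      rw [Nat.add_sub_cancel, Nat.cast_sub (by omega)]
      push_cast
      field_simp
      ring
    have h2 : 0 ≤ ∑ j ∈ Finset.range (14 * b * n + 1), (φ (7 * n - j / b) + φ (-(7 * n - j / b))) := by
      refine Finset.sum_nonneg fun j hj => ?_
      have hj' : (j : ℝ) ≤ 14 * b * n := by
        exact_mod_cast Nat.lt_succ_iff.1 (Finset.mem_range.1 hj)
      have hj2 : (j : ℝ) / b ≤ 14 * n := by
        rw [div_le_iff₀ hb0]; linarith
      have hj3 : 0 ≤ (j : ℝ) / b := by positivity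
      rcases le_total 0 (7 * n - j / b : ℝ) with h | h
      · exact phi_pair h (by linarith) htt
      · have := phi_pair (z := -(7 * n - j / b : ℝ)) (t := t) (t' := t') (by linarith) (by linarith) htt
        rw [neg_neg] at this
        rw [add_comm]
        exact this
    rw [Finset.sum_add_distrib, hr'] at h2
    linarith
  have h2 : ∑ j ∈ Finset.range (b * n), (-(8 * n / ((t + 7 * n) * (t' + 7 * n))))
      ≤ ∑ j ∈ Finset.range (b * n), φ (7 * n - ((14 * b * n + 1 + j : ℕ) : ℝ) / b) := by
    refine Finset.sum_le_sum fun j hj => ?_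
    have hj' : (j : ℝ) + 1 ≤ b * n := by exact_mod_cast Finset.mem_range.1 hj
    have hx1 : 14 * n ≤ ((14 * b * n + 1 + j : ℕ) : ℝ) / b := by
      rw [le_div_iff₀ hb0]; push_cast
      have := Nat.cast_nonneg (α := ℝ) j
      nlinarith
    have hx2 : ((14 * b * n + 1 + j : ℕ) : ℝ) / b ≤ 15 * n := by
      rw [div_le_iff₀ hb0]; push_cast
      nlinarith
    set x := ((14 * b * n + 1 + j : ℕ) : ℝ) / b
    have hh : φ (7 * n - x) = -((x - 7 * n) / ((t + (x - 7 * n)) * (t' + (x - 7 * n)))) := by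
      simp only [hφ]
      rw [← neg_div]
      congr 1
      · ring
      · ring
    rw [hh, neg_le_neg_iff]
    refine div_le_div₀ (by positivity) (by linarith) ?_ ?_
    · have : 0 < t + 7 * n := by linarith
      have : 0 < t' + 7 * n := by linarith
      positivity
    · exact mul_le_mul (by linarith) (by linarith) (by linarith) (by linarith)
  rw [Finset.sum_const, Finset.card_range, nsmul_eq_mul] at h2
  have e3 : ((b * n : ℕ) : ℝ) * -(8 * n / ((t + 7 * n) * (t' + 7 * n)))
      = -(b * n * (8 * n) / ((t + 7 * n) * (t' + 7 * n))) := by push_cast; ring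
  rw [e3] at h2
  linarith

/-- The function `(y + 7 n) * logDer y` is decreasing. In the variable `t = y + 7 n` the zeros in
`[-7 n, 7 n]` are symmetric and contribute with the right sign; those in `[-8 n, -7 n)` are
outweighed by the poles. -/
lemma logDer_anti {N σ n : ℕ} (hσ : 16 * tri N ≤ σ) {y y' : ℝ} (hy : 0 < y) (hyy : y ≤ y') :
    (y' + 7 * n) * logDer N σ n y' ≤ (y + 7 * n) * logDer N σ n y := by
  have hn0 : (0 : ℝ) ≤ n := Nat.cast_nonneg n
  set t := y + 7 * n with ht
  set t' := y' + 7 * n with ht'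
  have ht0 : 0 < t := by positivity
  have htt : t ≤ t' := by linarith
  have ht0' : 0 < t' := by linarith
  set Q := (t + 7 * n) * (t' + 7 * n) with hQ
  have hQ0 : 0 < Q := by positivity
  have d1 : t * (∑ b ∈ Finset.Icc 1 N, ∑ j ∈ Finset.range (15 * b * n + 1), (b : ℝ) / (b * y + j))
      - t' * (∑ b ∈ Finset.Icc 1 N, ∑ j ∈ Finset.range (15 * b * n + 1), (b : ℝ) / (b * y' + j))
      = (t' - t) * ∑ b ∈ Finset.Icc 1 N, ∑ j ∈ Finset.range (15 * b * n + 1),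
        (7 * n - j / b : ℝ) / ((t - (7 * n - j / b)) * (t' - (7 * n - j / b))) := by
    simp only [Finset.mul_sum]
    rw [← Finset.sum_sub_distrib]
    refine Finset.sum_congr rfl fun b hb => ?_
    rw [← Finset.sum_sub_distrib]
    refine Finset.sum_congr rfl fun j _ => ?_
    have h1 := factor_pos (j := j) hb hy
    have h2 := factor_pos (j := j) hb (hy.trans_le hyy)
    have hb0 : (0 : ℝ) < b := by exact_mod_cast (Finset.mem_Icc.1 hb).1
    have e1 : t - (7 * n - j / b) = (b * y + j) / b := by rw [ht]; field_simp; ring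
    have e2 : t' - (7 * n - j / b) = (b * y' + j) / b := by rw [ht']; field_simp; ring
    rw [e1, e2, ht, ht']
    field_simp
    ring
  have d2 : t' * (∑ k ∈ Finset.range (n + 1), 1 / (t' + (k : ℝ)))
      - t * (∑ k ∈ Finset.range (n + 1), 1 / (t + (k : ℝ)))
      = (t' - t) * ∑ k ∈ Finset.range (n + 1), (k : ℝ) / ((t + k) * (t' + k)) := by
    simp only [Finset.mul_sum]
    rw [← Finset.sum_sub_distrib]
    refine Finset.sum_congr rfl fun k _ => ?_
    have h1 : 0 < t + k := by positivity
    have h2 : 0 < t' + k := by positivity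
    field_simp
    ring
  have b1 : -(tri N * n * (8 * n) / Q) ≤ ∑ b ∈ Finset.Icc 1 N, ∑ j ∈ Finset.range (15 * b * n + 1),
        (7 * n - j / b : ℝ) / ((t - (7 * n - j / b)) * (t' - (7 * n - j / b))) := by
    have := Finset.sum_le_sum fun b (hb : b ∈ Finset.Icc 1 N) =>
      phi_sum (n := n) (t := t) (t' := t') (Finset.mem_Icc.1 hb).1 (by linarith) htt
    refine le_trans (le_of_eq ?_) this
    rw [Finset.sum_neg_distrib, ← Finset.sum_div, ← Finset.sum_mul, ← Finset.sum_mul, tri]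
    push_cast
    rfl
  have b2 : (n * (n + 1) / 2 : ℝ) / Q ≤ ∑ k ∈ Finset.range (n + 1), (k : ℝ) / ((t + k) * (t' + k)) := by
    have hs : (n * (n + 1) / 2 : ℝ) = ∑ k ∈ Finset.range (n + 1), (k : ℝ) := by
      have := Finset.sum_range_id_mul_two (n + 1)
      rw [Nat.add_sub_cancel] at this
      have h2 : (∑ k ∈ Finset.range (n + 1), (k : ℝ)) * 2 = (n + 1) * n := by
        have h3 := congrArg (Nat.cast (R := ℝ)) this
        push_cast at h3
        exact h3
      linarith
    rw [hs, Finset.sum_div]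
    refine Finset.sum_le_sum fun k hk => ?_
    have hk' : (k : ℝ) ≤ n := by exact_mod_cast Nat.lt_succ_iff.1 (Finset.mem_range.1 hk)
    have hk0 : (0 : ℝ) ≤ k := Nat.cast_nonneg k
    refine div_le_div_of_nonneg_left hk0 (by positivity) ?_
    exact mul_le_mul (by linarith) (by linarith) (by positivity) (by positivity)
  have hσ' : (16 : ℝ) * tri N ≤ σ := by exact_mod_cast hσ
  have hfin : 0 ≤ -(tri N * n * (8 * n) / Q) + σ * ((n * (n + 1) / 2 : ℝ) / Q) := by
    have : -(tri N * n * (8 * n) / Q) + σ * ((n * (n + 1) / 2 : ℝ) / Q)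
        = (σ * (n * (n + 1) / 2) - tri N * n * (8 * n)) / Q := by ring
    rw [this]
    refine div_nonneg ?_ hQ0.le
    nlinarith [mul_le_mul_of_nonneg_right hσ' (mul_nonneg hn0 hn0), mul_nonneg (Nat.cast_nonneg (α := ℝ) σ) hn0]
  have hσ0 : (0 : ℝ) ≤ σ := Nat.cast_nonneg σ
  have b3 := mul_le_mul_of_nonneg_left b2 hσ0
  have hnn := mul_nonneg (sub_nonneg.2 htt) (show (0 : ℝ) ≤ _ from hfin.trans (add_le_add b1 b3))
  unfold logDer
  rw [← ht, ← ht']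
  refine sub_nonneg.1 (hnn.trans (le_of_eq ?_))
  linear_combination -d1 - σ * d2

end OddZeta

/-! ### Unimodality -/

namespace OddZeta
open Filter Topology

lemma le_tri (N : ℕ) : N ≤ tri N := by
  rcases Nat.eq_zero_or_pos N with rfl | h
  · simp
  · exact Finset.single_le_sum (f := fun b => b) (fun _ _ => Nat.zero_le _)
      (Finset.mem_Icc.2 ⟨h, le_rfl⟩)

lemma degree_bound {N σ : ℕ} (hN : 1 ≤ N) (hσ : 16 * tri N ≤ σ) (n : ℕ) :
    15 * tri N * n + N + 2 ≤ σ * (n + 1) := by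
  have := le_tri N
  nlinarith [Nat.mul_le_mul_right (n + 1) hσ, Nat.zero_le (tri N * n)]

lemma sum_pole_le (n : ℕ) {y : ℝ} (hn : 1 ≤ n) (hy : 0 < y) :
    ∑ k ∈ Finset.range (n + 1), 1 / (y + 7 * n + (k : ℝ)) ≤ 1 := by
  have hn' : (1 : ℝ) ≤ n := by exact_mod_cast hn
  calc _ ≤ ∑ k ∈ Finset.range (n + 1), 1 / ((n : ℝ) + 1) := by
        refine Finset.sum_le_sum fun k _ => one_div_le_one_div_of_le (by positivity) ?_
        have := Nat.cast_nonneg (α := ℝ) k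
        linarith
    _ = 1 := by
        rw [Finset.sum_const, Finset.card_range, nsmul_eq_mul]
        push_cast
        field_simp

lemma first_block_le {N n : ℕ} {y : ℝ} (hN : 1 ≤ N) (hy : 0 < y) :
    ∑ j ∈ Finset.range (15 * n + 1), 1 / (y + j)
      ≤ ∑ b ∈ Finset.Icc 1 N, ∑ j ∈ Finset.range (15 * b * n + 1), (b : ℝ) / (b * y + j) := by
  have := Finset.single_le_sum
    (f := fun b : ℕ => ∑ j ∈ Finset.range (15 * b * n + 1), (b : ℝ) / (b * y + j))
    (s := Finset.Icc 1 N) (a := 1)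
    (fun b _ => Finset.sum_nonneg fun j _ => by positivity) (Finset.mem_Icc.2 ⟨le_rfl, hN⟩)
  simpa using this

lemma logDer_continuousOn (N σ n : ℕ) : ContinuousOn (logDer N σ n) (Set.Ioi 0) := by
  unfold logDer
  refine ContinuousOn.sub (continuousOn_finsetSum _ fun b hb => continuousOn_finsetSum _ fun j _ => ?_)
    (ContinuousOn.mul continuousOn_const (continuousOn_finsetSum _ fun k _ => ?_))
  · exact ContinuousOn.div continuousOn_const (by fun_prop) fun y hy => (factor_pos hb hy).ne'
  · refine ContinuousOn.div continuousOn_const (by fun_prop) fun y hy => ?_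
    have : (0 : ℝ) < y := hy
    positivity

/-- The logarithmic derivative changes sign: near `0` the zero at `0` dominates, and at infinity its
sign is that of the degree of `rfun`, which is negative. -/
lemma exists_peak {N σ n : ℕ} (hN : 1 ≤ N) (hn : 1 ≤ n) (hσ : 16 * tri N ≤ σ) :
    ∃ y : ℝ, 0 < y ∧ logDer N σ n y = 0 := by
  have hdeg := degree_bound hN hσ n
  have hn' : (1 : ℝ) ≤ n := by exact_mod_cast hn
  set ε : ℝ := 1 / (σ + 1) with hε
  set P : ℝ := 15 * tri N * n + N with hP
  set Q : ℝ := σ * (n + 1) with hQ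
  have hPQ : P + 2 ≤ Q := by rw [hP, hQ]; exact_mod_cast hdeg
  have hP0 : 0 ≤ P := by positivity
  set Y : ℝ := 8 * n * Q with hY
  have hε0 : 0 < ε := by positivity
  have hY0 : 16 ≤ Y := by nlinarith
  have hε1 : ε ≤ 1 := by
    rw [hε, div_le_one (by positivity)]
    have := Nat.cast_nonneg (α := ℝ) σ
    linarith
  have h1 : 0 ≤ logDer N σ n ε := by
    have e1 := first_block_le (n := n) hN hε0
    have e2 : 1 / ε ≤ ∑ j ∈ Finset.range (15 * n + 1), 1 / (ε + j) := by
      have := Finset.single_le_sum (f := fun j : ℕ => 1 / (ε + j)) (s := Finset.range (15 * n + 1))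
        (a := 0) (fun j _ => by positivity) (by simp)
      simpa using this
    have e3 := mul_le_mul_of_nonneg_left (sum_pole_le n hn hε0) (Nat.cast_nonneg (α := ℝ) σ)
    have e4 : 1 / ε = σ + 1 := by rw [hε, one_div_one_div]
    unfold logDer
    linarith
  have h2 : logDer N σ n Y ≤ 0 := by
    have hYp : 0 < Y := by linarith
    have e1 : ∑ b ∈ Finset.Icc 1 N, ∑ j ∈ Finset.range (15 * b * n + 1), (b : ℝ) / (b * Y + j)
        ≤ P / Y := by
      calc _ ≤ ∑ b ∈ Finset.Icc 1 N, ∑ j ∈ Finset.range (15 * b * n + 1), 1 / Y := by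
            refine Finset.sum_le_sum fun b hb => Finset.sum_le_sum fun j _ => ?_
            rw [div_le_div_iff₀ (factor_pos hb hYp) hYp]
            have := Nat.cast_nonneg (α := ℝ) j
            linarith
        _ = P / Y := by
            simp only [Finset.sum_const, Finset.card_range, nsmul_eq_mul]
            rw [← Finset.sum_mul, hP, tri]
            push_cast
            rw [Finset.sum_add_distrib, ← Finset.sum_mul, ← Finset.mul_sum]
            simp
            ring
    have e2 : ((n : ℝ) + 1) / (Y + 8 * n) ≤ ∑ k ∈ Finset.range (n + 1), 1 / (Y + 7 * n + (k : ℝ)) := by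
      calc ((n : ℝ) + 1) / (Y + 8 * n) = ∑ k ∈ Finset.range (n + 1), 1 / (Y + 8 * n) := by
            rw [Finset.sum_const, Finset.card_range, nsmul_eq_mul]; push_cast; ring
        _ ≤ _ := by
            refine Finset.sum_le_sum fun k hk => one_div_le_one_div_of_le (by positivity) ?_
            have hk' : (k : ℝ) ≤ n := by exact_mod_cast Nat.lt_succ_iff.1 (Finset.mem_range.1 hk)
            linarith
    have e3 := mul_le_mul_of_nonneg_left e2 (Nat.cast_nonneg (α := ℝ) σ)
    have e4 : P / Y ≤ σ * (((n : ℝ) + 1) / (Y + 8 * n)) := by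
      rw [← mul_div_assoc, ← hQ, div_le_div_iff₀ hYp (by positivity)]
      have : 8 * n * P ≤ (Q - P) * Y := by
        rw [hY]
        have : 8 * n * P ≤ 8 * n * Q := mul_le_mul_of_nonneg_left (by linarith) (by positivity)
        have : 0 ≤ 8 * n * Q := by positivity
        nlinarith
      linarith
    unfold logDer
    linarith
  obtain ⟨y, hy, hy0⟩ := intermediate_value_Icc' (by linarith : ε ≤ Y)
    ((logDer_continuousOn N σ n).mono fun x hx => hε0.trans_le hx.1) ⟨h2, h1⟩
  exact ⟨y, hε0.trans_le hy.1, hy0⟩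

/-- At a fixed point `X` the zeros with `b = 1` already contribute a partial sum of a divergent
harmonic series, while the poles contribute at most `σ`. -/
lemma logDer_pos_of_large {N : ℕ} (hN : 1 ≤ N) (σ : ℕ) {X : ℕ} (hX : 1 ≤ X) :
    ∃ n₀ : ℕ, ∀ n, n₀ ≤ n → 0 < logDer N σ n X := by
  have ht := Real.tendsto_sum_range_one_div_nat_succ_atTop
  obtain ⟨n₁, hn₁⟩ := eventually_atTop.1 (ht.eventually_gt_atTop ((X : ℝ) * σ))
  refine ⟨max n₁ 1, fun n hn => ?_⟩
  have hX' : (1 : ℝ) ≤ X := by exact_mod_cast hX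
  have hX0 : (0 : ℝ) < X := by linarith
  have h1 := hn₁ n ((le_max_left _ _).trans hn)
  have h2 : (1 / (X : ℝ)) * ∑ i ∈ Finset.range n, (1 : ℝ) / (i + 1)
      ≤ ∑ j ∈ Finset.range (15 * n + 1), 1 / ((X : ℝ) + j) := by
    rw [Finset.mul_sum]
    refine le_trans (Finset.sum_le_sum fun i _ => ?_)
      (Finset.sum_le_sum_of_subset_of_nonneg
        (Finset.range_mono (show n ≤ 15 * n + 1 by omega)) fun _ _ _ => by positivity)
    rw [one_div_mul_one_div]
    refine one_div_le_one_div_of_le (by positivity) ?_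
    have := Nat.cast_nonneg (α := ℝ) i
    nlinarith
  have h3 : (σ : ℝ) < (1 / (X : ℝ)) * ∑ i ∈ Finset.range n, (1 : ℝ) / (i + 1) := by
    rw [one_div, ← div_eq_inv_mul, lt_div_iff₀ hX0]
    linarith
  have h4 := first_block_le (n := n) hN hX0
  have h5 := mul_le_mul_of_nonneg_left (sum_pole_le n ((le_max_right _ _).trans hn) hX0)
    (Nat.cast_nonneg (α := ℝ) σ)
  unfold logDer
  linarith

lemma sum_sq_le (M : ℕ) {x : ℝ} (hx : 1 < x) :
    ∑ j ∈ Finset.range M, 1 / (x + j) ^ 2 ≤ 1 / (x - 1) := by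
  have h : ∑ j ∈ Finset.range M, 1 / (x + j) ^ 2
      ≤ ∑ j ∈ Finset.range M, (1 / (x + j - 1) - 1 / (x + ((j + 1 : ℕ) : ℝ) - 1)) := by
    refine Finset.sum_le_sum fun j _ => ?_
    have h0 := Nat.cast_nonneg (α := ℝ) j
    have h1 : 0 < x + j - 1 := by linarith
    push_cast
    have h2 : x + (j + 1) - 1 = x + j := by ring
    rw [h2, div_sub_div _ _ h1.ne' (by linarith), div_le_div_iff₀ (by positivity) (by positivity)]
    nlinarith
  rw [Finset.sum_range_sub' (fun j : ℕ => 1 / (x + (j : ℝ) - 1))] at h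
  have : 0 ≤ 1 / (x + (M : ℝ) - 1) := by
    have h0 := Nat.cast_nonneg (α := ℝ) M
    exact div_nonneg zero_le_one (by linarith)
  simp only [Nat.cast_zero, add_zero] at h
  linarith

/-- The logarithmic derivative stays close to zero on a window to the right of its zero. -/
lemma logDer_lower {N σ n : ℕ} {y₀ y J : ℝ} (hy₀ : 1 < y₀) (h0 : logDer N σ n y₀ = 0)
    (h1 : y₀ ≤ y) (h2 : y ≤ y₀ + J) : -(J * (tri N / (y₀ - 1))) ≤ logDer N σ n y := by
  have hyp : 0 < y₀ := by linarith
  have hJ : 0 ≤ J := by linarith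
  have a1 : (∑ b ∈ Finset.Icc 1 N, ∑ j ∈ Finset.range (15 * b * n + 1), (b : ℝ) / (b * y₀ + j))
      - (∑ b ∈ Finset.Icc 1 N, ∑ j ∈ Finset.range (15 * b * n + 1), (b : ℝ) / (b * y + j))
      ≤ J * (tri N / (y₀ - 1)) := by
    rw [← Finset.sum_sub_distrib, tri]
    push_cast
    rw [Finset.sum_div, Finset.mul_sum]
    refine Finset.sum_le_sum fun b hb => ?_
    have hb1 : (1 : ℝ) ≤ b := by exact_mod_cast (Finset.mem_Icc.1 hb).1
    rw [← Finset.sum_sub_distrib]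
    calc _ ≤ ∑ j ∈ Finset.range (15 * b * n + 1), (J * b ^ 2) * (1 / (b * y₀ + j) ^ 2) := by
          refine Finset.sum_le_sum fun j _ => ?_
          have p1 := factor_pos (j := j) hb hyp
          have p2 := factor_pos (j := j) hb (hyp.trans_le h1)
          have p3 : (b : ℝ) * y₀ + j ≤ b * y + j := by nlinarith
          rw [div_sub_div _ _ p1.ne' p2.ne', mul_one_div,
            div_le_div_iff₀ (mul_pos p1 p2) (by positivity)]
          have e : (b : ℝ) * (b * y + j) - (b * y₀ + j) * b = b ^ 2 * (y - y₀) := by ring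
          rw [e]
          calc (b : ℝ) ^ 2 * (y - y₀) * (b * y₀ + j) ^ 2
              ≤ (b : ℝ) ^ 2 * J * (b * y₀ + j) ^ 2 := by
                refine mul_le_mul_of_nonneg_right ?_ (by positivity)
                exact mul_le_mul_of_nonneg_left (by linarith) (by positivity)
            _ = (J * b ^ 2) * ((b * y₀ + j) * (b * y₀ + j)) := by ring
            _ ≤ _ := by
                refine mul_le_mul_of_nonneg_left ?_ (by positivity)
                exact mul_le_mul_of_nonneg_left p3 p1.le
      _ ≤ (J * b ^ 2) * (1 / (b * y₀ - 1)) := by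
          rw [← Finset.mul_sum]
          exact mul_le_mul_of_nonneg_left (sum_sq_le _ (by nlinarith)) (by positivity)
      _ ≤ J * (b / (y₀ - 1)) := by
          have p4 : 0 < y₀ - 1 := by linarith
          have p5 : 0 < b * y₀ - 1 := by nlinarith
          rw [mul_assoc]
          refine mul_le_mul_of_nonneg_left ?_ hJ
          rw [mul_one_div, div_le_div_iff₀ p5 p4]
          nlinarith
  have a2 : ∑ k ∈ Finset.range (n + 1), 1 / (y + 7 * n + (k : ℝ))
      ≤ ∑ k ∈ Finset.range (n + 1), 1 / (y₀ + 7 * n + (k : ℝ)) :=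
    Finset.sum_le_sum fun k _ => one_div_le_one_div_of_le (by positivity) (by linarith)
  have a3 := mul_le_mul_of_nonneg_left a2 (Nat.cast_nonneg (α := ℝ) σ)
  unfold logDer at h0 ⊢
  linarith

/-- For large `n` the function `shifted` is unimodal, with a peak far to the right and flat on a
window of prescribed length. -/
lemma unimodal {N σ : ℕ} (hN : 1 ≤ N) (hσ : 16 * tri N ≤ σ) (J : ℕ) (hJ : 1 ≤ J) :
    ∃ n₀ : ℕ, ∀ n, n₀ ≤ n → ∃ y₀ : ℝ, 0 < y₀ ∧ MonotoneOn (shifted N σ n) (Set.Ioc 0 y₀) ∧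
      AntitoneOn (shifted N σ n) (Set.Ici y₀) ∧ ∀ y, y₀ ≤ y → y ≤ y₀ + J →
        Real.exp (-1) * shifted N σ n y₀ ≤ shifted N σ n y := by
  have hJ' : (1 : ℝ) ≤ J := by exact_mod_cast hJ
  -- a zero `y₀ > X` of `logDer` makes `J * tri N / (y₀ - 1) ≤ 1 / J`, so that by `logDer_lower` the
  -- logarithm drops by at most `1` over a length `J`
  set X : ℕ := 2 + J ^ 2 * tri N with hX
  obtain ⟨n₀, hn₀⟩ := logDer_pos_of_large hN σ (X := X) (by omega)
  refine ⟨max n₀ 1, fun n hn => ?_⟩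
  obtain ⟨y₀, hy0, hz⟩ := exists_peak hN ((le_max_right _ _).trans hn) hσ
  obtain ⟨C, hC, hf⟩ := shifted_eq N σ n
  have sgn1 : ∀ y, 0 < y → y ≤ y₀ → 0 ≤ logDer N σ n y := by
    intro y hy hyy
    have := logDer_anti (n := n) hσ hy hyy
    rw [hz, mul_zero] at this
    exact nonneg_of_mul_nonneg_right this (by positivity)
  have sgn2 : ∀ y, y₀ ≤ y → logDer N σ n y ≤ 0 := by
    intro y hyy
    have := logDer_anti (n := n) hσ hy0 hyy
    rw [hz, mul_zero] at this
    have hy := hy0.trans_le hyy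
    by_contra! hcon
    have : 0 < (y + 7 * n) * logDer N σ n y := by positivity
    linarith
  have hXy : (X : ℝ) < y₀ := by
    by_contra! hcon
    exact absurd (hn₀ n ((le_max_left _ _).trans hn)) (not_lt.2 (sgn2 _ hcon))
  have hy1 : 1 + (J : ℝ) ^ 2 * tri N ≤ y₀ - 1 := by
    have : (X : ℝ) = 2 + (J : ℝ) ^ 2 * tri N := by rw [hX]; push_cast; ring
    linarith
  have hy2 : 0 ≤ (J : ℝ) ^ 2 * tri N := by positivity
  have hcont : ContinuousOn (logFun N σ n) (Set.Ioi 0) := fun x hx =>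
    (logFun_hasDerivAt N σ n hx).continuousAt.continuousWithinAt
  refine ⟨y₀, hy0, ?_, ?_, ?_⟩
  · have hm : MonotoneOn (logFun N σ n) (Set.Ioc 0 y₀) := by
      refine monotoneOn_of_deriv_nonneg (convex_Ioc 0 y₀) (hcont.mono fun x hx => hx.1) ?_ ?_
      · intro x hx
        rw [interior_Ioc] at hx
        exact (logFun_hasDerivAt N σ n hx.1).differentiableAt.differentiableWithinAt
      · intro x hx
        rw [interior_Ioc] at hx
        rw [(logFun_hasDerivAt N σ n hx.1).deriv]
        exact sgn1 x hx.1 hx.2.le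
    intro x hx y hy hxy
    rw [hf x hx.1, hf y hy.1]
    exact mul_le_mul_of_nonneg_left (Real.exp_le_exp.2 (hm hx hy hxy)) hC.le
  · have hm : AntitoneOn (logFun N σ n) (Set.Ici y₀) := by
      refine antitoneOn_of_deriv_nonpos (convex_Ici y₀) (hcont.mono fun x hx => hy0.trans_le hx) ?_ ?_
      · intro x hx
        rw [interior_Ici] at hx
        exact (logFun_hasDerivAt N σ n (hy0.trans hx)).differentiableAt.differentiableWithinAt
      · intro x hx
        rw [interior_Ici] at hx
        rw [(logFun_hasDerivAt N σ n (hy0.trans hx)).deriv]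
        exact sgn2 x (le_of_lt hx)
    intro x hx y hy hxy
    rw [hf x (hy0.trans_le hx), hf y (hy0.trans_le hy)]
    exact mul_le_mul_of_nonneg_left (Real.exp_le_exp.2 (hm hx hy hxy)) hC.le
  · intro y h1 h2
    have key := (convex_Icc y₀ (y₀ + J)).mul_sub_le_image_sub_of_le_deriv
      (f := logFun N σ n) (C := -(1 / J)) (hcont.mono fun x hx => hy0.trans_le hx.1)
      (by
        intro x hx
        rw [interior_Icc] at hx
        exact (logFun_hasDerivAt N σ n (hy0.trans hx.1)).differentiableAt.differentiableWithinAt)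
      (by
        intro x hx
        rw [interior_Icc] at hx
        rw [(logFun_hasDerivAt N σ n (hy0.trans hx.1)).deriv]
        refine le_trans ?_ (logDer_lower (J := J) (by linarith) hz hx.1.le hx.2.le)
        rw [neg_le_neg_iff, ← mul_div_assoc, div_le_div_iff₀ (by linarith) (by linarith)]
        nlinarith)
      y₀ ⟨le_rfl, by linarith⟩ y ⟨h1, h2⟩ h1
    have k2 : -1 ≤ -(1 / (J : ℝ)) * (y - y₀) := by
      rw [neg_mul, neg_le_neg_iff, one_div, ← div_eq_inv_mul, div_le_one (by linarith)]
      linarith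
    rw [hf y₀ hy0, hf y (hy0.trans_le h1), mul_left_comm, ← Real.exp_add]
    exact mul_le_mul_of_nonneg_left (Real.exp_le_exp.2 (by linarith)) hC.le

end OddZeta

/-! ### Comparison of the sums with different denominators -/

namespace OddZeta
open Filter Topology

/-- For a function increasing up to `y₀` and decreasing afterwards, the oscillations add up to at
most `2 f(y₀)`: they are controlled by the increments of a function increasing from `0` to
`2 f(y₀)`. -/
lemma exists_variation {f : ℝ → ℝ} {y₀ : ℝ} (hy₀ : 0 < y₀) (hf : ∀ y, 0 < y → 0 ≤ f y)
    (hm : MonotoneOn f (Set.Ioc 0 y₀)) (ha : AntitoneOn f (Set.Ici y₀)) :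
    ∃ V : ℝ → ℝ, (∀ x, 0 < x → 0 ≤ V x ∧ V x ≤ 2 * f y₀) ∧
      ∀ x y, 0 < x → x ≤ y → |f x - f y| ≤ V y - V x := by
  have h1 : ∀ x, 0 < x → x ≤ y₀ → f x ≤ f y₀ := fun x hx hxy =>
    hm ⟨hx, hxy⟩ ⟨hy₀, le_rfl⟩ hxy
  have h2 : ∀ x, y₀ ≤ x → f x ≤ f y₀ := fun x hx => ha (Set.mem_Ici.2 le_rfl) hx hx
  refine ⟨fun y => if y ≤ y₀ then f y else 2 * f y₀ - f y, fun x hx => ?_, fun x y hx hxy => ?_⟩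
  · have h0 := hf x hx
    have h00 := hf y₀ hy₀
    by_cases h : x ≤ y₀
    · have := h1 x hx h
      simp only [h, if_true]; constructor <;> linarith
    · have := h2 x (not_le.1 h).le
      simp only [h, if_false]; constructor <;> linarith
  · dsimp only
    by_cases hy : y ≤ y₀
    · have := hm ⟨hx, hxy.trans hy⟩ ⟨hx.trans_le hxy, hy⟩ hxy
      rw [if_pos hy, if_pos (hxy.trans hy), abs_sub_comm, abs_of_nonneg (by linarith)]
    · rw [if_neg hy]
      have hy' := (not_le.1 hy).le
      by_cases h : x ≤ y₀
      · have a1 := h1 x hx h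
        have a2 := h2 y hy'
        rw [if_pos h, abs_le]; constructor <;> linarith
      · have := ha (not_le.1 h).le hy' hxy
        rw [if_neg h, abs_of_nonneg (by linarith)]; linarith

/-- A Riemann sum of mesh `1 / b` of a unimodal function is within `2 f(y₀)` of the one of
mesh `1`. -/
lemma compare_sums {f : ℝ → ℝ} {y₀ : ℝ} (hy₀ : 0 < y₀) (hf : ∀ y, 0 < y → 0 ≤ f y)
    (hm : MonotoneOn f (Set.Ioc 0 y₀)) (ha : AntitoneOn f (Set.Ici y₀)) {b : ℕ} (hb : 1 ≤ b)
    {T T' : ℝ} (hT : HasSum (fun m : ℕ => f (((m : ℝ) + 1) / b)) T)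
    (hT' : HasSum (fun m : ℕ => f ((m : ℝ) + 1)) T') : |T - b * T'| ≤ 2 * b * f y₀ := by
  obtain ⟨V, hV, hV'⟩ := exists_variation hy₀ hf hm ha
  have hbpos : (0 : ℝ) < b := by exact_mod_cast hb
  set U : ℕ → ℝ := fun m => if m = 0 then 0 else V m with hU
  have hU2 : ∀ m, U m ≤ 2 * f y₀ := by
    intro m
    rcases Nat.eq_zero_or_pos m with h | h
    · subst h; simp [hU]; exact hf _ hy₀
    · simp only [hU, h.ne', if_false]; exact (hV m (by exact_mod_cast h)).2
  have step : ∀ m r : ℕ, r < b →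
      |f (((b * m + r : ℕ) + 1 : ℝ) / b) - f ((m : ℝ) + 1)| ≤ U (m + 1) - U m := by
    intro m r hr
    have hr' : (r : ℝ) + 1 ≤ b := by exact_mod_cast hr
    have hx0 : (m : ℝ) < ((b * m + r : ℕ) + 1 : ℝ) / b := by
      rw [lt_div_iff₀ hbpos]; push_cast; have : (0 : ℝ) ≤ r := r.cast_nonneg
      nlinarith
    have hx1 : ((b * m + r : ℕ) + 1 : ℝ) / b ≤ m + 1 := by
      rw [div_le_iff₀ hbpos]; push_cast; nlinarith
    have hxp : 0 < ((b * m + r : ℕ) + 1 : ℝ) / b := lt_of_le_of_lt m.cast_nonneg hx0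
    refine (hV' _ _ hxp hx1).trans ?_
    have e : U (m + 1) = V (m + 1) := by simp [hU]
    rw [e]
    refine sub_le_sub_left ?_ _
    rcases Nat.eq_zero_or_pos m with h | h
    · have := (hV _ hxp).1
      simpa [hU, h] using this
    · simp only [hU, h.ne', if_false]
      have := (abs_nonneg _).trans (hV' m _ (by exact_mod_cast h) hx0.le)
      linarith
  have part : ∀ k : ℕ, |∑ m ∈ Finset.range (b * k), f (((m : ℝ) + 1) / b)
      - b * ∑ m ∈ Finset.range k, f ((m : ℝ) + 1)| ≤ b * U k := by
    intro k
    induction k with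
    | zero => simp [hU]
    | succ k ih =>
      rw [Nat.mul_succ, Finset.sum_range_add, Finset.sum_range_succ]
      have : |∑ r ∈ Finset.range b, (f (((b * k + r : ℕ) + 1 : ℝ) / b) - f ((k : ℝ) + 1))|
          ≤ b * (U (k + 1) - U k) := by
        refine (Finset.abs_sum_le_sum_abs _ _).trans ?_
        refine (Finset.sum_le_card_nsmul _ _ _ fun r hr => step k r (Finset.mem_range.1 hr)).trans ?_
        simp
      rw [Finset.sum_sub_distrib, Finset.sum_const, Finset.card_range, nsmul_eq_mul] at this
      rw [abs_le] at *
      constructor <;> nlinarith [ih.1, ih.2, this.1, this.2]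
  have l1 : Tendsto (fun k : ℕ => ∑ m ∈ Finset.range (b * k), f (((m : ℝ) + 1) / b)) atTop (𝓝 T) :=
    hT.tendsto_sum_nat.comp (tendsto_id.const_mul_atTop' (by omega))
  have l2 := (hT'.tendsto_sum_nat.const_mul (b : ℝ))
  refine le_of_tendsto (l1.sub l2).abs (Eventually.of_forall fun k => (part k).trans ?_)
  nlinarith [hU2 k]

/-- If the function stays above `e⁻¹ f(y₀)` for a length `J`, then its integer sum is large. -/
lemma sum_ge {f : ℝ → ℝ} {y₀ : ℝ} (hy₀ : 0 < y₀) (hf : ∀ y, 0 < y → 0 ≤ f y) {J : ℕ}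
    (hJ : ∀ y, y₀ ≤ y → y ≤ y₀ + J → exp (-1) * f y₀ ≤ f y) {T' : ℝ}
    (hT' : HasSum (fun m : ℕ => f ((m : ℝ) + 1)) T') : J * (exp (-1) * f y₀) ≤ T' := by
  have hc : 0 < ⌈y₀⌉₊ := Nat.ceil_pos.2 hy₀
  have := sum_le_hasSum ((Finset.range J).image fun i => ⌈y₀⌉₊ - 1 + i)
    (fun i _ => hf _ (by positivity)) hT'
  refine le_trans ?_ this
  rw [Finset.sum_image (by intro a _ b _ h; simpa using h)]
  have h3 := Finset.card_nsmul_le_sum (Finset.range J)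
    (fun i : ℕ => f (((⌈y₀⌉₊ - 1 + i : ℕ) : ℝ) + 1)) (exp (-1) * f y₀) (fun i hi => ?_)
  · simpa using h3
  · have e : (((⌈y₀⌉₊ - 1 + i : ℕ) : ℝ) + 1) = ⌈y₀⌉₊ + i := by
      have : ⌈y₀⌉₊ - 1 + i + 1 = ⌈y₀⌉₊ + i := by omega
      exact_mod_cast this
    rw [e]
    have hi' : (i : ℝ) + 1 ≤ J := by exact_mod_cast Finset.mem_range.1 hi
    have h0 : (0 : ℝ) ≤ i := i.cast_nonneg
    exact hJ _ (by linarith [Nat.le_ceil y₀]) (by linarith [Nat.ceil_lt_add_one hy₀.le])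

/-- The zeros of `rfun` shift the summation. -/
lemma hasSum_shift {N σ n b : ℕ} (hb : 1 ≤ b) {T : ℝ}
    (hz : ∀ q : ℕ, 1 ≤ q → q ≤ 7 * b * n → rfun N σ n (q / b : ℝ) = 0)
    (hT : HasSum (fun m : ℕ => rfun N σ n (((m : ℝ) + 1) / b)) T) :
    HasSum (fun m : ℕ => shifted N σ n (((m : ℝ) + 1) / b)) T := by
  have hb0 : (b : ℝ) ≠ 0 := by positivity
  have h := (hasSum_nat_add_iff' (7 * b * n)).2 hT
  rw [Finset.sum_eq_zero, sub_zero] at h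
  · convert! h using 1
    ext m
    rw [shifted]; congr 1; push_cast; field_simp; ring
  · intro m hm
    have := hz (m + 1) (by omega) (by have := Finset.mem_range.1 hm; omega)
    push_cast at this; exact this

lemma rfun_zero {N σ n b q : ℕ} (hb : 1 ≤ b) (hbN : b ≤ N) (hq : q ≤ 7 * b * n) :
    rfun N σ n (q / b : ℝ) = 0 := by
  have hb0 : (b : ℝ) ≠ 0 := by positivity
  have : num N n (q / b : ℝ) = 0 := by
    unfold num
    refine Finset.prod_eq_zero (Finset.mem_Icc.2 ⟨hb, hbN⟩) ?_
    refine Finset.prod_eq_zero (i := 7 * b * n - q) (Finset.mem_range.2 ?_) ?_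
    · have : 7 * b * n ≤ 15 * b * n := by gcongr; norm_num
      omega
    · rw [Nat.cast_sub hq]; push_cast; field_simp; ring
  rw [rfun, this]; simp

/-- For large `n` a weighted sum of the `T b ≈ b * T 1` is governed by the integer `∑ w b * b`: it
is nonzero and bounded by a multiple of `T 1`. -/
lemma weighted_sum {N σ : ℕ} (hN : 1 ≤ N) (hσ : 16 * tri N ≤ σ) (w : ℕ → ℤ)
    (hw : ∑ b ∈ Finset.Icc 1 N, w b * (b : ℤ) ≠ 0) :
    ∃ C : ℝ, ∃ n₀ : ℕ, ∀ n ≥ n₀, ∀ T : ℕ → ℝ,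
      (∀ b ∈ Finset.Icc 1 N, HasSum (fun m : ℕ => shifted N σ n (((m : ℝ) + 1) / b)) (T b)) →
      ∑ b ∈ Finset.Icc 1 N, (w b : ℝ) * T b ≠ 0 ∧
        |∑ b ∈ Finset.Icc 1 N, (w b : ℝ) * T b| ≤ C * T 1 := by
  set S : ℤ := ∑ b ∈ Finset.Icc 1 N, w b * (b : ℤ) with hS
  set W : ℕ := ∑ b ∈ Finset.Icc 1 N, (w b).natAbs * b with hW
  have hS1 : (1 : ℝ) ≤ |(S : ℝ)| := by exact_mod_cast Int.one_le_abs hw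
  obtain ⟨n₀, h⟩ := unimodal hN hσ (6 * W + 1) (by omega)
  refine ⟨|(S : ℝ)| + 1, n₀, fun n hn T hT => ?_⟩
  obtain ⟨y₀, hy₀, hm, ha, hJ⟩ := h n hn
  obtain ⟨c, hc, hcf⟩ := shifted_eq N σ n
  have hf : ∀ y, 0 < y → 0 ≤ shifted N σ n y := fun y hy => by rw [hcf y hy]; positivity
  have hM : 0 < shifted N σ n y₀ := by rw [hcf y₀ hy₀]; positivity
  set M := shifted N σ n y₀ with hMdef
  have hT1 : HasSum (fun m : ℕ => shifted N σ n ((m : ℝ) + 1)) (T 1) := by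
    simpa using hT 1 (Finset.mem_Icc.2 ⟨le_rfl, hN⟩)
  have hbig := sum_ge hy₀ hf hJ hT1
  -- the choice of `J = 6 W + 1` makes `T 1` exceed the total error `2 W M`, as `e < 3`
  have hlt : 2 * W * M < T 1 := by
    refine lt_of_lt_of_le ?_ hbig
    have he : (1 : ℝ) / 3 < exp (-1) := by
      rw [Real.exp_neg, ← one_div]
      exact one_div_lt_one_div_of_lt (Real.exp_pos _) (by linarith [Real.exp_one_lt_d9])
    have hW0 : (0 : ℝ) ≤ W := W.cast_nonneg
    push_cast
    rw [← mul_assoc]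
    refine mul_lt_mul_of_pos_right ?_ hM
    nlinarith
  have herr : |∑ b ∈ Finset.Icc 1 N, (w b : ℝ) * T b - S * T 1| ≤ 2 * W * M := by
    have e : ∑ b ∈ Finset.Icc 1 N, (w b : ℝ) * T b - S * T 1
        = ∑ b ∈ Finset.Icc 1 N, (w b : ℝ) * (T b - b * T 1) := by
      rw [hS]; push_cast
      rw [Finset.sum_mul, ← Finset.sum_sub_distrib]
      exact Finset.sum_congr rfl fun b _ => by ring
    rw [e, hW]
    push_cast
    rw [Finset.mul_sum, Finset.sum_mul]
    refine (Finset.abs_sum_le_sum_abs _ _).trans (Finset.sum_le_sum fun b hb => ?_)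
    have := compare_sums hy₀ hf hm ha (Finset.mem_Icc.1 hb).1 (hT b hb) hT1
    rw [abs_mul]
    have e2 : ((w b).natAbs : ℝ) = |(w b : ℝ)| := by
      rw [Nat.cast_natAbs, Int.cast_abs]
    rw [e2]
    nlinarith [abs_nonneg (w b : ℝ)]
  have hT1pos : 0 < T 1 := lt_of_le_of_lt (by positivity) hlt
  have hS2 : |(S : ℝ) * T 1| = |(S : ℝ)| * T 1 := by rw [abs_mul, abs_of_pos hT1pos]
  constructor
  · intro h0
    rw [h0, zero_sub, abs_neg, hS2] at herr
    nlinarith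
  · have := abs_sub_abs_le_abs_sub (∑ b ∈ Finset.Icc 1 N, (w b : ℝ) * T b) (S * T 1)
    rw [hS2] at this
    linarith
end OddZeta

/-! ### Decay of the sums -/

namespace OddZeta
open Filter Topology

lemma factorial_div_prod_le {n : ℕ} (hn : 1 ≤ n) {t : ℝ} (ht : 1 ≤ t) :
    (n.factorial : ℝ) / ∏ k ∈ Finset.range (n + 1), (t + k) ≤ (n / (t + n)) ^ n := by
  rw [Finset.prod_range_succ', ← Finset.prod_range_add_one_eq_factorial]
  have hpos : ∀ k : ℕ, 0 < t + ((k + 1 : ℕ) : ℝ) := fun k => by positivity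
  push_cast at *
  rw [add_zero, ← div_div]
  refine (div_le_self (by positivity) ht).trans ?_
  rw [← Finset.prod_div_distrib]
  refine (Finset.prod_le_prod (fun k _ => by positivity) (fun k hk => ?_)).trans
    (by rw [Finset.prod_const, Finset.card_range])
  have hk' : (k : ℝ) + 1 ≤ n := by exact_mod_cast Finset.mem_range.1 hk
  rw [div_le_div_iff₀ (hpos k) (by positivity)]
  nlinarith

lemma pow_le_factorial (n : ℕ) : ((n : ℝ) / exp 1) ^ n ≤ n.factorial := by
  have := Real.pow_div_factorial_le_exp (n : ℝ) n.cast_nonneg n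
  rw [div_le_iff₀ (by positivity)] at this
  rw [div_pow, div_le_iff₀ (by positivity), ← Real.exp_nat_mul, mul_one]
  linarith

/-- Upper bound for `shifted`, with a factor `1 / y ^ 2` for summability. With `v = y + 8 n`, the
numerator is at most a power of `2 N v`, each block `n! / (t ⋯ (t + n))` is at most `(n / v) ^ n`,
and `n / v ≤ 1 / 8`; all but two of the excess powers of `n / v` are bounded in this way. -/
lemma shifted_le {N σ n : ℕ} (hN : 1 ≤ N) (hσ : 16 * tri N ≤ σ) (hn : 3 ≤ n) {y : ℝ}
    (hy : 1 ≤ y) :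
    shifted N σ n y ≤ (2 * N) ^ N * 8 ^ (N + 2) * n ^ (N + 2)
      * ((16 * exp 1 * N) ^ (15 * tri N) / 8 ^ σ) ^ n * (1 / y ^ 2) := by
  have hE := le_tri N
  set E := tri N with hEdef
  have hN' : (0 : ℝ) < N := by exact_mod_cast hN
  have hn' : (0 : ℝ) < n := by positivity
  set v : ℝ := y + 7 * n + n with hv
  have hvpos : 0 < v := by positivity
  have hx8 : (n : ℝ) / v ≤ 1 / 8 := by
    rw [div_le_div_iff₀ hvpos (by norm_num)]; linarith
  set x : ℝ := n / v with hx
  have hxpos : 0 < x := by positivity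
  obtain ⟨r, hr⟩ : ∃ r, n * σ = 15 * E * n + N + 2 + r := by
    refine Nat.exists_eq_add_of_le ?_
    have h1 : n * (16 * E) ≤ n * σ := Nat.mul_le_mul_left _ hσ
    have h2 : 3 * E ≤ n * E := Nat.mul_le_mul_right _ hn
    nlinarith
  have hnum := num_bounds (N := N) (n := n) (t := y + 7 * n) (by linarith)
  have hA : num N n (y + 7 * n) / (n.factorial : ℝ) ^ (15 * E)
      ≤ (2 * N * v) ^ (15 * E * n + N) / ((n / exp 1) ^ n) ^ (15 * E) := by
    have := pow_le_factorial n
    gcongr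
    exact hnum.2
  have hB : ((n.factorial : ℝ) / ∏ k ∈ Finset.range (n + 1), (y + 7 * n + (k : ℝ))) ^ σ
      ≤ (x ^ n) ^ σ := by
    have h1 : 0 < ∏ k ∈ Finset.range (n + 1), (y + 7 * n + (k : ℝ)) :=
      Finset.prod_pos fun k _ => by positivity
    exact pow_le_pow_left₀ (by positivity) (factorial_div_prod_le (by omega) (by linarith)) _
  have hmain : shifted N σ n y ≤
      (2 * N * v) ^ (15 * E * n + N) / ((n / exp 1) ^ n) ^ (15 * E) * (x ^ n) ^ σ := by
    rw [shifted, rfun]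
    have h1 : 0 < ∏ k ∈ Finset.range (n + 1), (y + 7 * n + (k : ℝ)) :=
      Finset.prod_pos fun k _ => by positivity
    refine mul_le_mul hA hB (by positivity) (by positivity)
  refine hmain.trans ?_
  have e1 : (2 * N * v) ^ (15 * E * n + N) / ((n / exp 1) ^ n) ^ (15 * E) * (x ^ n) ^ σ
      = (2 * N) ^ N * n ^ N * (2 * exp 1 * N) ^ (15 * E * n) * x ^ (r + 2) := by
    have hvx : v = n / x := by rw [hx]; field_simp
    rw [← pow_mul x, hr, ← pow_mul, show n * (15 * E) = 15 * E * n by ring, hvx]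
    generalize 15 * E * n = a
    have he : exp 1 ≠ 0 := (Real.exp_pos 1).ne'
    simp only [pow_add, mul_pow, div_pow]
    field_simp
  have e2 : ((16 * exp 1 * N) ^ (15 * E) / 8 ^ σ) ^ n
      = (2 * exp 1 * N) ^ (15 * E * n) * (1 / 8) ^ r / 8 ^ (N + 2) := by
    rw [div_pow, ← pow_mul, ← pow_mul, mul_comm σ n, hr, show (16 : ℝ) * exp 1 * N = 8 * (2 * exp 1 * N) by ring]
    generalize 15 * E * n = a
    simp only [pow_add, mul_pow, div_pow, one_pow]
    field_simp
  have hxy : x ≤ n / y := by rw [hx]; gcongr; rw [hv]; linarith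
  have h3 : x ^ (r + 2) ≤ (1 / 8) ^ r * (n / y) ^ 2 := by
    rw [pow_add]; gcongr
  rw [e1, e2]
  calc _ ≤ (2 * N) ^ N * n ^ N * (2 * exp 1 * N) ^ (15 * E * n) * ((1 / 8) ^ r * (n / y : ℝ) ^ 2) := by
        gcongr
    _ = _ := by
        have : y ≠ 0 := by positivity
        field_simp
        ring

lemma sum_le {N σ n : ℕ} (hN : 1 ≤ N) (hσ : 16 * tri N ≤ σ) (hn : 3 ≤ n) {T : ℝ}
    (hT : HasSum (fun m : ℕ => shifted N σ n ((m : ℝ) + 1)) T) :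
    T ≤ (2 * N) ^ N * 8 ^ (N + 2) * zetaR 2 * (n ^ (N + 2)
      * ((16 * exp 1 * N) ^ (15 * tri N) / 8 ^ σ) ^ n) := by
  have := hasSum_le (fun m : ℕ => shifted_le hN hσ hn (y := (m : ℝ) + 1)
    (by linarith [m.cast_nonneg (α := ℝ)])) hT ((zetaR_hasSum le_rfl).mul_left _)
  refine this.trans (le_of_eq ?_)
  ring

/-- Since `log (lcm (1, …, n)) = ψ n` and Chebyshev's bound gives `ψ n ≤ n log 4 + o(n)`. -/
lemma lcm_le : ∀ᶠ n : ℕ in atTop, (n.lcmUpto : ℝ) ≤ 5 ^ n := by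
  have hlog : 0 < Real.log (5 / 4) := Real.log_pos (by norm_num)
  have h : (fun x : ℝ => √x * Real.log x) =o[atTop] fun x : ℝ => x := by
    have h1 := (isLittleO_log_rpow_atTop (r := 1 / 2) (by norm_num))
    have h2 := (Asymptotics.isBigO_refl (fun x : ℝ => √x) atTop).mul_isLittleO h1
    refine h2.congr' EventuallyEq.rfl ?_
    filter_upwards [eventually_ge_atTop 0] with x hx
    rw [← Real.sqrt_eq_rpow, Real.mul_self_sqrt hx]
  have h' := (h.bound (c := Real.log (5 / 4) / 2) (by positivity))
  filter_upwards [tendsto_natCast_atTop_atTop.eventually h', eventually_ge_atTop 1] with n hn hn1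
  have hn1' : (1 : ℝ) ≤ n := by exact_mod_cast hn1
  have hpsi := Chebyshev.psi_le hn1'
  rw [Chebyshev.psi_eq_log_lcmUpto] at hpsi
  have hp : (0 : ℝ) < n.lcmUpto := by exact_mod_cast n.lcmUpto_pos
  rw [← Real.log_le_log_iff hp (by positivity), Real.log_pow]
  have e : Real.log 5 = Real.log 4 + Real.log (5 / 4) := by
    rw [← Real.log_mul (by norm_num) (by norm_num)]; norm_num
  rw [Real.norm_eq_abs, Real.norm_eq_abs, abs_of_pos (by linarith : (0 : ℝ) < n)] at hn
  have := le_abs_self (√(n : ℝ) * Real.log n)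
  rw [e]; linarith

lemma tendsto_zero {N σ : ℕ} (hN : 1 ≤ N)
    (hlt : (16 * exp 1 * N) ^ (15 * tri N) < (8 / 5 : ℝ) ^ σ) :
    Tendsto (fun n : ℕ => ((5 : ℝ) ^ n) ^ σ * (n ^ (N + 2)
      * ((16 * exp 1 * N) ^ (15 * tri N) / 8 ^ σ) ^ n)) atTop (𝓝 0) := by
  set A : ℝ := (16 * exp 1 * N) ^ (15 * tri N) with hA
  have hA0 : 0 ≤ A := by positivity
  have := tendsto_pow_const_mul_const_pow_of_lt_one (N + 2) (r := A / (8 / 5) ^ σ)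
    (by positivity) (by rw [div_lt_one (by positivity)]; exact hlt)
  refine this.congr fun n => ?_
  rw [← pow_mul, mul_comm n σ, pow_mul, mul_left_comm, ← mul_pow]
  congr 2
  rw [div_pow]; field_simp
end OddZeta

/-! ### Choice of the parameters -/

namespace OddZeta

lemma two_mul_tri (N : ℕ) : 2 * tri N = N * (N + 1) := by
  unfold tri
  induction N with
  | zero => simp
  | succ n ih => rw [Finset.sum_Icc_succ_top (by omega), mul_add, ih]; ring

/-- The choice `N = ⌈√s / (10 √(log s))⌉`, with `σ` one of `s - 1`, `s` according to parity. Then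
`tri N` is at most `0.011 s / log s`, so `15 * tri N * log (16 e N)` is smaller than `σ log (8 / 5)`. -/
lemma parameters {s : ℕ} (hs : 10 ^ 4 ≤ s) :
    ∃ N σ : ℕ, (1 / 10 : ℝ) * √s / √(Real.log s) ≤ N ∧ 1 ≤ N ∧ σ ≤ s ∧ 16 * tri N ≤ σ ∧
      Odd (N + σ) ∧ (16 * exp 1 * N) ^ (15 * tri N) < (8 / 5 : ℝ) ^ σ := by
  have hs' : (10 ^ 4 : ℝ) ≤ s := by exact_mod_cast hs
  have hs0 : (0 : ℝ) < s := by linarith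
  have hlog10 : Real.log (10 ^ 4) = 12 * Real.log 2 + 4 * Real.log (5 / 4) := by
    rw [show (10 : ℝ) ^ 4 = 2 ^ 12 * (5 / 4) ^ 4 by norm_num,
      Real.log_mul (by norm_num) (by norm_num), Real.log_pow, Real.log_pow]; norm_num
  have hlo := Real.one_sub_inv_le_log_of_pos (show (0 : ℝ) < 5 / 4 by norm_num)
  have hup := Real.log_le_sub_one_of_pos (show (0 : ℝ) < 5 / 4 by norm_num)
  have h2lo := Real.log_two_gt_d9
  have h2up := Real.log_two_lt_d9
  set L := Real.log s with hL
  have hL9 : 9 ≤ L := by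
    have : Real.log (10 ^ 4) ≤ L := Real.log_le_log (by norm_num) hs'
    rw [hlog10] at this; norm_num at hlo; linarith
  have hLs : L ≤ s / 10 ^ 3 := by
    have h1 : L = Real.log (10 ^ 4) + Real.log (s / 10 ^ 4) := by
      rw [← Real.log_mul (by norm_num) (by positivity), hL]; congr 1; field_simp
    have h3 := Real.log_le_sub_one_of_pos (show (0 : ℝ) < s / 10 ^ 4 by positivity)
    rw [hlog10] at h1; norm_num at hup; linarith
  set y : ℝ := (1 / 10 : ℝ) * √s / √L with hy
  have hy0 : 0 < y := by positivity
  have hyL : y ^ 2 * L = s / 100 := by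
    rw [hy, div_pow, mul_pow, Real.sq_sqrt hs0.le, Real.sq_sqrt (by linarith)]
    field_simp; norm_num
  have hy10 : 10 ≤ y ^ 2 := by nlinarith
  have hy3 : 3.16 ≤ y := by
    by_contra! h
    nlinarith
  have hys : y ^ 2 ≤ s / 900 := by nlinarith
  set N := ⌈y⌉₊ with hN
  have hN1 : y ≤ N := Nat.le_ceil y
  have hN2 : (N : ℝ) < y + 1 := Nat.ceil_lt_add_one hy0.le
  have hNpos : 1 ≤ N := Nat.ceil_pos.2 hy0
  have hNr : (1 : ℝ) ≤ N := by exact_mod_cast hNpos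
  have hE : (tri N : ℝ) ≤ 1.1 * y ^ 2 := by
    have : (2 : ℝ) * tri N = N * (N + 1) := by exact_mod_cast two_mul_tri N
    nlinarith
  have hEL : (tri N : ℝ) * L ≤ 0.011 * s := by nlinarith
  obtain ⟨σ, hσ1, hσ2, hodd⟩ : ∃ σ, σ ≤ s ∧ s ≤ σ + 1 ∧ Odd (N + σ) := by
    rcases Nat.even_or_odd (N + s) with h | h
    · exact ⟨s - 1, by omega, by omega, by
        rw [show N + (s - 1) = N + s - 1 by omega]
        exact Nat.Even.sub_odd (by omega) h odd_one⟩
    · exact ⟨s, le_rfl, by omega, h⟩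
  have hσ' : (s : ℝ) ≤ σ + 1 := by exact_mod_cast hσ2
  refine ⟨N, σ, hN1, hNpos, hσ1, ?_, hodd, ?_⟩
  · have : (16 : ℝ) * tri N ≤ σ := by nlinarith
    exact_mod_cast this
  · have he := Real.exp_one_lt_d9
    have he' := Real.exp_pos 1
    have hbase : 16 * exp 1 * N ≤ s := by
      have : 16 * exp 1 * N ≤ 16 * 3 * (y + 1) := by gcongr; linarith
      nlinarith
    have hl : Real.log (16 * exp 1 * N) ≤ L := Real.log_le_log (by positivity) hbase
    have h85 := Real.one_sub_inv_le_log_of_pos (show (0 : ℝ) < 8 / 5 by norm_num)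
    rw [← Real.log_lt_log_iff (by positivity) (by positivity), Real.log_pow, Real.log_pow]
    push_cast
    have h1 : (15 * tri N : ℝ) * Real.log (16 * exp 1 * N) ≤ 15 * tri N * L := by gcongr
    norm_num at h85
    nlinarith
end OddZeta

/-! ### The irrationality argument -/

namespace OddZeta
open Filter Topology

lemma common_denominator (S : Finset ℕ) (f : ℕ → ℝ) (h : ∀ i ∈ S, ¬ Irrational (f i)) :
    ∃ Q : ℕ, 0 < Q ∧ ∀ i ∈ S, ∃ z : ℤ, Q * f i = z := by
  have : ∀ i ∈ S, ∃ q : ℚ, f i = q := fun i hi => by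
    have := h i hi
    simp only [Irrational, not_not] at this
    obtain ⟨q, hq⟩ := this
    exact ⟨q, hq.symm⟩
  choose! q hq using this
  refine ⟨∏ i ∈ S, (q i).den, Finset.prod_pos fun i _ => (q i).den_pos, fun i hi => ?_⟩
  obtain ⟨c, hc⟩ := Finset.dvd_prod_of_mem (fun i => (q i).den) hi
  refine ⟨c * (q i).num, ?_⟩
  rw [hc, hq i hi]
  have h1 : ((q i).den : ℝ) * (q i : ℝ) = (q i).num := by exact_mod_cast (q i).den_mul_eq_num
  push_cast
  rw [← h1]; ring

/-- Weighted by integers killing the irrational zeta values, the linear forms sum to rationals of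
bounded denominator. -/
lemma weighted_form_int {N σ n d Q : ℕ} {I : Finset ℕ} {w : ℕ → ℤ} {B : ℕ → ℕ → ℤ}
    (hd0 : d ≠ 0) (hd : ∀ l, 1 ≤ l → l ≤ n → l ∣ d)
    (hB : ∀ t : ℝ, (∀ k : ℕ, k ≤ n → t + k ≠ 0) → 2 * (d : ℝ) ^ σ * rfun N σ n t
        = ∑ i ∈ Finset.Icc 1 σ, ∑ k ∈ Finset.range (n + 1), B i k * (d / (t + k)) ^ i)
    (hev : ∀ i, Even i → ∑ k ∈ Finset.range (n + 1), B i k = 0)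
    (hw : ∀ i ∈ I, ∑ b ∈ Finset.Icc 1 N, w b * (b : ℤ) ^ i = 0)
    (hQ : ∀ i, 3 ≤ i → i ≤ σ → Odd i → i ∉ I → ∃ z : ℤ, Q * zetaR i = z) :
    ∃ z : ℤ, Q * ∑ b ∈ Finset.Icc 1 N, (w b : ℝ) *
      (∑ i ∈ Finset.Icc 1 σ, (d * b : ℝ) ^ i * (if i = 1 then 0 else zetaR i)
          * ((∑ k ∈ Finset.range (n + 1), B i k : ℤ) : ℝ) - ratPart B σ n d b) = z := by
  have h1 : ∀ i ∈ Finset.Icc 1 σ, ∃ z : ℤ, (Q : ℝ) * (if i = 1 then 0 else zetaR i)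
      * ((∑ k ∈ Finset.range (n + 1), B i k : ℤ) : ℝ)
      * ((∑ b ∈ Finset.Icc 1 N, w b * (b : ℤ) ^ i : ℤ) : ℝ) = z := by
    intro i hi
    rcases Nat.even_or_odd i with he | ho
    · exact ⟨0, by rw [hev i he]; simp⟩
    by_cases hi1 : i = 1
    · exact ⟨0, by simp [hi1]⟩
    by_cases hiI : i ∈ I
    · exact ⟨0, by rw [hw i hiI]; simp⟩
    have hi' := Finset.mem_Icc.1 hi
    obtain ⟨z, hz⟩ := hQ i (by obtain ⟨r, rfl⟩ := ho; omega) hi'.2 ho hiI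
    refine ⟨z * (∑ k ∈ Finset.range (n + 1), B i k) * (∑ b ∈ Finset.Icc 1 N, w b * (b : ℤ) ^ i), ?_⟩
    rw [if_neg hi1, hz]
    push_cast; ring
  have h2 : ∀ b ∈ Finset.Icc 1 N, ∃ z : ℤ, ratPart B σ n d b = z := fun b hb =>
    ratPart_int (Finset.mem_Icc.1 hb).1 (Finset.mem_Icc.1 hb).2 hd0 hd hB
  choose! z hz using h1
  choose! r hr using h2
  refine ⟨∑ i ∈ Finset.Icc 1 σ, z i * (d : ℤ) ^ i - Q * ∑ b ∈ Finset.Icc 1 N, w b * r b, ?_⟩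
  simp only [mul_sub, Finset.sum_sub_distrib]
  push_cast
  congr 1
  · simp only [Finset.mul_sum]
    rw [Finset.sum_comm]
    refine Finset.sum_congr rfl fun i hi => ?_
    rw [← hz i hi]
    push_cast
    simp only [Finset.mul_sum, Finset.sum_mul]
    refine Finset.sum_congr rfl fun k _ => Finset.sum_congr rfl fun b _ => ?_
    rw [mul_pow]; ring
  · congr 1
    exact Finset.sum_congr rfl fun b hb => by rw [hr b hb]

/-- Under the conditions on `N` and `σ`, any set containing all odd `3 ≤ i ≤ σ` with irrational
`ζ(i)` has at least `N` elements: otherwise the weighted linear forms would give a nonzero integer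
`z` with `|z| < 1`. -/
lemma card_irrational_gt {N σ : ℕ} (hN : 1 ≤ N) (hσ : 16 * tri N ≤ σ) (hpar : Odd (N + σ))
    (hlt : (16 * exp 1 * N) ^ (15 * tri N) < (8 / 5 : ℝ) ^ σ) (I : Finset ℕ) (hI1 : 1 ∉ I)
    (hI : ∀ i, 3 ≤ i → i ≤ σ → Odd i → Irrational (zetaR i) → i ∈ I) : N ≤ I.card := by
  by_contra! hcard
  obtain ⟨w, hw, hw1⟩ := exists_weights N I hcard hI1
  obtain ⟨Q, hQ0, hQ⟩ := common_denominator
    ((Finset.Icc 3 σ).filter (fun i => Odd i ∧ i ∉ I)) zetaR (by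
      intro i hi hirr
      simp only [Finset.mem_filter, Finset.mem_Icc] at hi
      exact hi.2.2 (hI i hi.1.1 hi.1.2 hi.2.1 hirr))
  have hQ' : ∀ i, 3 ≤ i → i ≤ σ → Odd i → i ∉ I → ∃ z : ℤ, Q * zetaR i = z :=
    fun i h1 h2 h3 h4 => hQ i (by simp [*])
  obtain ⟨C, n₀, hC⟩ := weighted_sum hN hσ w hw1
  have hσ1 : 1 ≤ σ := by have := le_tri N; omega
  -- all constants independent of `n` in the final upper bound for `|z|`
  set K : ℝ := Q * (2 * (|C| * ((2 * N) ^ N * 8 ^ (N + 2) * zetaR 2))) with hK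
  have hlim := (tendsto_zero hN hlt).const_mul K
  rw [mul_zero] at hlim
  obtain ⟨n₁, hn₁⟩ := eventually_atTop.1 ((hlim.eventually_lt_const one_pos).and lcm_le)
  obtain ⟨n, hn0, hnlarge1, hn3, hneven⟩ : ∃ n, n₀ ≤ n ∧ n₁ ≤ n ∧ 3 ≤ n ∧ Even n :=
    ⟨2 * (n₀ + n₁ + 2), by omega, by omega, by omega, even_two_mul _⟩
  obtain ⟨hsmall, hlcm⟩ := hn₁ n hnlarge1
  set d := n.lcmUpto with hd
  have hd0 : d ≠ 0 := n.lcmUpto_ne_zero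
  have hdvd : ∀ l, 1 ≤ l → l ≤ n → l ∣ d := fun l h1 h2 =>
    Finset.dvd_lcm (f := id) (Finset.mem_Icc.2 ⟨h1, h2⟩)
  obtain ⟨B, hB, hev, hB1⟩ := rfun_partial_odd (N := N) (σ := σ) (by omega) hneven hσ1
    (degree_bound hN hσ n) hpar hd0 hdvd
  have hdpos : (0 : ℝ) < d := by positivity
  set F : ℕ → ℝ := fun b =>
      ∑ i ∈ Finset.Icc 1 σ, (d * b : ℝ) ^ i * (if i = 1 then 0 else zetaR i)
          * ((∑ k ∈ Finset.range (n + 1), B i k : ℤ) : ℝ) - ratPart B σ n d b with hF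
  set T : ℕ → ℝ := fun b => (2 * (d : ℝ) ^ σ)⁻¹ * F b with hT
  have hsum : ∀ b ∈ Finset.Icc 1 N,
      HasSum (fun m : ℕ => shifted N σ n (((m : ℝ) + 1) / b)) (T b) := by
    intro b hb
    obtain ⟨hb1, hbN⟩ := Finset.mem_Icc.1 hb
    have hbpos : (0 : ℝ) < b := by exact_mod_cast hb1
    refine hasSum_shift hb1 (fun q _ hq => rfun_zero hb1 hbN hq) ?_
    have := (linear_form (d := d) (σ := σ) hb1 hB1).mul_left (2 * (d : ℝ) ^ σ)⁻¹
    convert! this using 1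
    ext m
    rw [← hB _ (fun k _ => by positivity)]
    field_simp
  obtain ⟨hne, hle⟩ := hC n hn0 T hsum
  have hsum1 : HasSum (fun m : ℕ => shifted N σ n ((m : ℝ) + 1)) (T 1) := by
    simpa using hsum 1 (Finset.mem_Icc.2 ⟨le_rfl, hN⟩)
  have hT1 : 0 ≤ T 1 := hsum1.nonneg fun m => by
    obtain ⟨c, hc, hcf⟩ := shifted_eq N σ n
    rw [hcf _ (by positivity)]; positivity
  have hT1le := sum_le hN hσ hn3 hsum1
  obtain ⟨z, hz⟩ := weighted_form_int hd0 hdvd hB hev hw hQ'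
  have hzT : (z : ℝ) = Q * (2 * (d : ℝ) ^ σ) * ∑ b ∈ Finset.Icc 1 N, (w b : ℝ) * T b := by
    rw [← hz, mul_assoc]
    congr 1
    rw [Finset.mul_sum]
    refine Finset.sum_congr rfl fun b _ => ?_
    simp only [hT, hF]
    field_simp
  have hz0 : z ≠ 0 := by
    intro h0
    rw [h0, Int.cast_zero] at hzT
    have hq : (0 : ℝ) < Q := by exact_mod_cast hQ0
    have : (Q : ℝ) * (2 * (d : ℝ) ^ σ) ≠ 0 := by positivity
    exact (mul_ne_zero this hne) hzT.symm
  have hz1 : (1 : ℝ) ≤ |(z : ℝ)| := by exact_mod_cast Int.one_le_abs hz0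
  have hdσ : (d : ℝ) ^ σ ≤ (5 ^ n) ^ σ := pow_le_pow_left₀ hdpos.le hlcm _
  set X : ℝ := n ^ (N + 2) * ((16 * exp 1 * N) ^ (15 * tri N) / 8 ^ σ) ^ n with hX
  refine absurd hsmall (not_lt.2 (hz1.trans ?_))
  rw [hzT, abs_mul, abs_of_nonneg (by positivity)]
  calc Q * (2 * (d : ℝ) ^ σ) * |∑ b ∈ Finset.Icc 1 N, (w b : ℝ) * T b|
      ≤ Q * (2 * (5 ^ n) ^ σ) * (|C| * ((2 * N) ^ N * 8 ^ (N + 2) * zetaR 2 * X)) := by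
        gcongr
        refine hle.trans ?_
        exact mul_le_mul (le_abs_self C) hT1le hT1 (abs_nonneg C)
    _ = K * ((5 ^ n) ^ σ * X) := by rw [hK]; ring
end OddZeta

/-- For every odd integer `s ≥ 10⁴`, there are at least `(1/10)·s^{1/2}/(log s)^{1/2}`
irrational numbers among `ζ(3), ζ(5), ζ(7), …, ζ(s)`. -/
theorem explicit_number_of_irrational_odd_zeta_values (s : ℕ) (hs : Odd s)
    (hs' : 10 ^ 4 ≤ s) :
    (1 / 10 : ℝ) * Real.sqrt s / Real.sqrt (Real.log s) ≤
      ({i : ℕ | 3 ≤ i ∧ i ≤ s ∧ Odd i ∧ Irrational (zetaR i)}.ncard : ℝ) := by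
  classical
  obtain ⟨N, σ, hN, hN1, hσs, hσ, hpar, hlt⟩ := OddZeta.parameters hs'
  refine hN.trans ?_
  have hfin : {i : ℕ | 3 ≤ i ∧ i ≤ s ∧ Odd i ∧ Irrational (zetaR i)}.Finite :=
    (Set.finite_Iic s).subset fun i hi => hi.2.1
  rw [Set.ncard_eq_toFinset_card _ hfin]
  exact_mod_cast OddZeta.card_irrational_gt hN1 hσ hpar hlt hfin.toFinset (by simp)
    fun i h1 h2 h3 h4 => by simpa using ⟨h1, h2.trans hσs, h3, h4⟩
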